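/- Let d and m₁ be positive integers, let a₁, a₂, a₃ be complex constants, and let g = (g₁,g₂) ∈ 𝒪(ℂ²,0,0) be given by g₁(x₁,x₂) = x₁^{m₁+1}(a₁ + o(1)) + x₂^d(a₂ + o(1)) and g₂(x₁,x₂) = x₁^{m₁}x₂(a₃ + o(1)) + x₂^{d+1}·O(1). If the origin is an isolated zero of g, then π_g(0) ≥ dm₁ + m₁ + 1. If a₁ ≠ 0, a₂ ≠ 0 and a₃ ≠ 0, then the origin is an isolated zero of g and π_g(0) = dm₁ + m₁ + 1. -/

import Mathlib

open Metric Set Filter Topology Polynomial Asymptotics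
open scoped Classical

noncomputable section

namespace ZhangPaper


/-- `ℂⁿ`. -/
abbrev Cn (n : ℕ) := Fin n → ℂ

variable {n : ℕ}

/-- A germ in `𝒪(ℂⁿ,0,0)`: holomorphic near `0` and fixing the origin. -/
def IsGerm (f : Cn n → Cn n) : Prop := AnalyticAt ℂ f 0 ∧ f 0 = 0

/-- `q` is a regular value of `h` on `s`. -/
def IsRegularValueOn (h : Cn n → Cn n) (s : Set (Cn n)) (q : Cn n) : Prop :=
  ∀ x ∈ s, h x = q → Function.Bijective (fderiv ℂ h x)

/-- `m` is the zero order (multiplicity) of `h` at the isolated zero `p`: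
the number of solutions of `h x = q` near `p`, for any regular value `q`
with `‖q‖` sufficiently small. -/
def HasZeroOrder (h : Cn n → Cn n) (p : Cn n) (m : ℕ) : Prop :=
  ∃ r > 0, AnalyticOnNhd ℂ h (closedBall p r) ∧ h p = 0 ∧
    (∀ x ∈ closedBall p r, h x = 0 → x = p) ∧
    (∀ ε > 0, ∃ q : Cn n, ‖q‖ < ε ∧ IsRegularValueOn h (ball p r) q) ∧
    ∃ δ > 0, ∀ q : Cn n, ‖q‖ < δ → IsRegularValueOn h (ball p r) q →
      {x ∈ ball p r | h x = q}.ncard = m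

/-- The zero order `π_h(p)` of `h` at `p`. -/
def zeroOrder (h : Cn n → Cn n) (p : Cn n) : ℕ := sInf {m | HasZeroOrder h p m}

/-- The fixed point index `μ_g(p)` of `g` at `p`. -/
def fixedPointIndex (g : Cn n → Cn n) (p : Cn n) : ℕ :=
  zeroOrder (fun x => x - g x) p

/-- The local Dold index `P_M(f,0)`. -/
def doldIndex (f : Cn n → Cn n) (M : ℕ) : ℤ :=
  ∑ τ ∈ M.primeFactors.powerset,
    (-1 : ℤ) ^ τ.card * (fixedPointIndex (f^[M / (∏ p ∈ τ, p)]) 0 : ℤ)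

/-- `x` is a periodic point of exact period `M` for `g`. -/
def ExactPeriodicPt (g : Cn n → Cn n) (M : ℕ) (x : Cn n) : Prop :=
  g^[M] x = x ∧ ∀ j, 0 < j → j < M → g^[j] x ≠ x

/-- `g` has at least `m` distinct periodic orbits of period `M` inside `B`. -/
def AtLeastOrbits (g : Cn n → Cn n) (M m : ℕ) (B : Set (Cn n)) : Prop :=
  ∃ p : Fin m → Cn n,
    (∀ i, ExactPeriodicPt g M (p i) ∧ ∀ j < M, g^[j] (p i) ∈ B) ∧
    ∀ i j : Fin m, i ≠ j → ∀ l < M, g^[l] (p i) ≠ p j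

/-- `g` has exactly `m` distinct periodic orbits of period `M` inside `B`. -/
def ExactlyOrbits (g : Cn n → Cn n) (M m : ℕ) (B : Set (Cn n)) : Prop :=
  AtLeastOrbits g M m B ∧ ¬ AtLeastOrbits g M (m + 1) B

/-- The number `𝒪_M(f,0)` of periodic orbits of period `M` of `f` hidden at the
fixed point `0`: the largest `m` such that there is a ball `B` centered at `0` in which
`0` is the only fixed point of `f^M`, and a sequence of holomorphic maps fixing `0`
converging to `f` uniformly on `B`, each having `m` distinct periodic orbits of
period `M` in `B`. -/
def hiddenOrbits (f : Cn n → Cn n) (M : ℕ) : ℕ :=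
  sSup {m | ∃ r > 0,
    (∀ x ∈ closedBall (0 : Cn n) r, f^[M] x = x → x = 0) ∧
    ∃ fk : ℕ → Cn n → Cn n,
      (∀ k, AnalyticOnNhd ℂ (fk k) (ball (0 : Cn n) r) ∧ fk k 0 = 0) ∧
      TendstoUniformlyOn fk f atTop (ball (0 : Cn n) r) ∧
      ∀ k, AtLeastOrbits (fk k) M m (ball (0 : Cn n) r)}

/-- `0` is an isolated fixed point of `g`. -/
def IsolatedFixedPtAt0 (g : Cn n → Cn n) : Prop :=
  g 0 = 0 ∧ ∀ᶠ x in 𝓝[≠] (0 : Cn n), g x ≠ x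

/-- `0` is an isolated zero of `h`. -/
def IsolatedZeroAt0 (h : Cn n → Cn n) : Prop :=
  h 0 = 0 ∧ ∀ᶠ x in 𝓝[≠] (0 : Cn n), h x ≠ 0

/-- `p` is a simple fixed point of `g`: `Dg(p)` has no eigenvalue `1`. -/
def SimpleFixedPt (g : Cn n → Cn n) (p : Cn n) : Prop :=
  g p = p ∧ ¬ Module.End.HasEigenvalue ((fderiv ℂ g p).toLinearMap) 1

/-- The global fixed point index `L(g)` of `g` over `U`: the sum of the fixed point
indices at all fixed points of `g` in `U`. -/
def globalIndex (g : Cn n → Cn n) (U : Set (Cn n)) : ℤ :=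
  ∑ᶠ p ∈ {x ∈ U | g x = x}, (fixedPointIndex g p : ℤ)

/-- The global Dold index `P_M(f)` over `U`. -/
def globalDold (f : Cn n → Cn n) (M : ℕ) (U : Set (Cn n)) : ℤ :=
  ∑ τ ∈ M.primeFactors.powerset,
    (-1 : ℤ) ^ τ.card * globalIndex (f^[M / (∏ p ∈ τ, p)]) U



/-! ### One variable: zeros with multiplicity in a disc centred at the origin -/

/-- `Z` is the multiset of zeros of `F` in the disc of radius `a`. -/
def IsFac (a : ℝ) (F : ℂ → ℂ) (Z : Multiset ℂ) : Prop :=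
  (∀ z ∈ Z, z ∈ ball (0 : ℂ) a) ∧ ∃ U : ℂ → ℂ, AnalyticOnNhd ℂ U (closedBall 0 a) ∧
    (∀ x ∈ closedBall (0 : ℂ) a, U x ≠ 0) ∧ ∀ x, F x = (Z.map (fun z => x - z)).prod * U x

/-- `F` is analytic on the closed disc and does not vanish on its boundary. -/
def NV (a : ℝ) (F : ℂ → ℂ) : Prop :=
  AnalyticOnNhd ℂ F (closedBall 0 a) ∧ ∀ x ∈ sphere (0 : ℂ) a, F x ≠ 0

lemma analytic_extract {F : ℂ → ℂ} {z : ℂ} (hF : AnalyticAt ℂ F z)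
    (hne : ¬ ∀ᶠ x in 𝓝 z, F x = 0) (hz : F z = 0) :
    ∃ n : ℕ, ∃ U : ℂ → ℂ, AnalyticAt ℂ U z ∧ U z ≠ 0 ∧ (∀ x, F x = (x - z) ^ n * U x) := by
  obtain ⟨n, V, hV, hV0, hFV⟩ := (hF.exists_eventuallyEq_pow_smul_nonzero_iff).2 hne
  have hn : n ≠ 0 := by
    rintro rfl
    have := hFV.self_of_nhds
    simp [hz] at this
    exact hV0 this.symm
  refine ⟨n, fun x => if x = z then V z else F x / (x - z) ^ n, ?_, ?_, ?_⟩
  · refine hV.congr ?_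
    filter_upwards [hFV] with x hx
    by_cases h : x = z
    · simp [h]
    · have : x - z ≠ 0 := sub_ne_zero.2 h
      simp only [h, if_false, hx, smul_eq_mul]
      field_simp
  · simpa using hV0
  · intro x
    by_cases h : x = z
    · subst h; simp [hz, hn]
    · have : x - z ≠ 0 := sub_ne_zero.2 h
      simp only [h, if_false]
      field_simp

lemma finite_zeros {a : ℝ} (ha : 0 < a) {F : ℂ → ℂ} (hF : NV a F) :
    {x ∈ closedBall (0 : ℂ) a | F x = 0}.Finite := by
  by_contra hinf
  obtain ⟨x, hx, hacc⟩ := Set.Infinite.exists_accPt_of_subset_isCompact (Set.not_finite.1 hinf |> fun h => h)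
    (isCompact_closedBall (0 : ℂ) a) (fun x hx => hx.1)
  have hfr : ∃ᶠ y in 𝓝[≠] x, F y = 0 := by
    rw [accPt_iff_frequently_nhdsNE] at hacc
    exact hacc.mono fun y hy => hy.2
  have := hF.1.eqOn_zero_of_preconnected_of_frequently_eq_zero
    (convex_closedBall (0 : ℂ) a).isPreconnected hx hfr
  have ha' : ((a : ℝ) : ℂ) ∈ sphere (0 : ℂ) a := by simp [abs_of_pos ha]
  exact hF.2 _ ha' (this (sphere_subset_closedBall ha'))

lemma not_locally_zero {a : ℝ} (ha : 0 < a) {F : ℂ → ℂ} (hF : NV a F) {z : ℂ}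
    (hz : z ∈ closedBall (0 : ℂ) a) : ¬ ∀ᶠ x in 𝓝 z, F x = 0 := by
  intro h
  have := hF.1.eqOn_zero_of_preconnected_of_eventuallyEq_zero
    (convex_closedBall (0 : ℂ) a).isPreconnected hz h
  have ha' : ((a : ℝ) : ℂ) ∈ sphere (0 : ℂ) a := by simp [abs_of_pos ha]
  exact hF.2 _ ha' (this (sphere_subset_closedBall ha'))

lemma exists_fac {a : ℝ} (ha : 0 < a) {F : ℂ → ℂ} (hF : NV a F) : ∃ Z, IsFac a F Z := by
  have key : ∀ S : Finset ℂ, ∀ F : ℂ → ℂ, NV a F →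
      (∀ x ∈ closedBall (0 : ℂ) a, F x = 0 → x ∈ S) → ∃ Z, IsFac a F Z := by
    intro S
    induction S using Finset.induction_on with
    | empty =>
      intro F hF h
      exact ⟨0, by simp, F, hF.1, fun x hx h0 => by simpa using h x hx h0, by simp⟩
    | insert z S hzS ih =>
      intro F hF h
      by_cases hz : z ∈ closedBall (0 : ℂ) a ∧ F z = 0
      · obtain ⟨n, U, hU, hU0, hFU⟩ := analytic_extract (hF.1 z hz.1)
          (not_locally_zero ha hF hz.1) hz.2
        have hUa : AnalyticOnNhd ℂ U (closedBall 0 a) := by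
          intro x hx
          by_cases hxz : x = z
          · rwa [hxz]
          · have : AnalyticAt ℂ (fun y => F y / (y - z) ^ n) x :=
              (hF.1 x hx).div (by fun_prop) (pow_ne_zero _ (sub_ne_zero.2 hxz))
            refine this.congr ?_
            filter_upwards [isOpen_ne.mem_nhds hxz] with y hy
            have : y - z ≠ 0 := sub_ne_zero.2 hy
            rw [hFU y]; field_simp
        have hUs : ∀ x ∈ sphere (0 : ℂ) a, U x ≠ 0 := by
          intro x hx h0
          apply hF.2 x hx
          rw [hFU, h0, mul_zero]
        obtain ⟨Z, hZ, V, hV, hV0, hUV⟩ := ih U ⟨hUa, hUs⟩ (by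
          intro x hx h0
          have h1 := h x hx (by rw [hFU, h0, mul_zero])
          rcases Finset.mem_insert.1 h1 with h2 | h2
          · exact absurd (h2 ▸ h0) hU0
          · exact h2)
        have hzb : z ∈ ball (0 : ℂ) a := by
          rcases (mem_closedBall.1 hz.1).lt_or_eq with h1 | h1
          · exact h1
          · exact absurd hz.2 (hF.2 z h1)
        refine ⟨Multiset.replicate n z + Z, ?_, V, hV, hV0, ?_⟩
        · intro w hw
          rcases Multiset.mem_add.1 hw with h1 | h1
          · rwa [Multiset.eq_of_mem_replicate h1]
          · exact hZ w h1
        · intro x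
          rw [hFU, hUV]
          simp [mul_assoc]
      · refine ih F hF fun x hx h0 => ?_
        rcases Finset.mem_insert.1 (h x hx h0) with h2 | h2
        · exact absurd ⟨h2 ▸ hx, h2 ▸ h0⟩ hz
        · exact h2
  refine key (finite_zeros ha hF).toFinset F hF fun x hx h0 => ?_
  simpa using ⟨by simpa using hx, h0⟩

/-- The multiset of zeros in the disc. -/
def zs (a : ℝ) (F : ℂ → ℂ) : Multiset ℂ :=
  if h : ∃ Z, IsFac a F Z then h.choose else 0

lemma zs_spec {a : ℝ} (ha : 0 < a) {F : ℂ → ℂ} (hF : NV a F) : IsFac a F (zs a F) := by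
  have h := exists_fac ha hF
  rw [zs, dif_pos h]
  exact h.choose_spec

lemma mem_zs {a : ℝ} (ha : 0 < a) {F : ℂ → ℂ} (hF : NV a F) {z : ℂ} :
    z ∈ zs a F ↔ z ∈ ball (0 : ℂ) a ∧ F z = 0 := by
  obtain ⟨h1, U, hU, hU0, hFU⟩ := zs_spec ha hF
  constructor
  · intro h
    refine ⟨h1 z h, ?_⟩
    rw [hFU, Multiset.prod_eq_zero, zero_mul]
    exact Multiset.mem_map.2 ⟨z, h, by simp⟩
  · rintro ⟨hz, h0⟩
    rw [hFU] at h0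
    rcases mul_eq_zero.1 h0 with h | h
    · obtain ⟨w, hw, hw'⟩ := Multiset.mem_map.1 (Multiset.prod_eq_zero_iff.1 h)
      rwa [sub_eq_zero.1 hw']
    · exact absurd h (hU0 z (ball_subset_closedBall hz))

/-- Residue computation. -/
lemma integral_fac {a : ℝ} (ha : 0 < a) {φ : ℂ → ℂ} (hφ : AnalyticOnNhd ℂ φ (closedBall 0 a))
    (Z : Multiset ℂ) : ∀ F : ℂ → ℂ, IsFac a F Z →
    (∮ x in C(0, a), φ x * (deriv F x / F x)) = 2 * Real.pi * Complex.I * (Z.map φ).sum := by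
  induction Z using Multiset.induction_on with
  | empty =>
    rintro F ⟨-, U, hU, hU0, hFU⟩
    have : F = U := by funext x; simpa using hFU x
    subst this
    simp only [Multiset.map_zero, Multiset.sum_zero, mul_zero]
    have hd : DifferentiableOn ℂ (fun x => φ x * (deriv F x / F x)) (closedBall 0 a) := by
      intro x hx
      exact ((hφ x hx).mul (((hU x hx).deriv).div (hU x hx) (hU0 x hx))).differentiableAt.differentiableWithinAt
    exact Complex.circleIntegral_eq_zero_of_differentiable_on_off_countable ha.le
      Set.countable_empty hd.continuousOn
      (fun x hx => (hd x (ball_subset_closedBall hx.1)).differentiableAt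
        (closedBall_mem_nhds_of_mem hx.1))
  | cons z Z ih =>
    rintro F ⟨hZ, U, hU, hU0, hFU⟩
    set G : ℂ → ℂ := fun x => (Z.map (fun z => x - z)).prod * U x with hG
    have hGfac : IsFac a G Z := ⟨fun w hw => hZ w (Multiset.mem_cons_of_mem hw), U, hU, hU0,
      fun _ => rfl⟩
    have hFG : F = fun x => (x - z) * G x := by
      funext x; rw [hFU]; simp [hG, mul_assoc]
    have hz : z ∈ ball (0 : ℂ) a := hZ z (Multiset.mem_cons_self z Z)
    have hGa : AnalyticOnNhd ℂ G (closedBall 0 a) := by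
      intro x hx
      refine AnalyticAt.mul ?_ (hU x hx)
      have : (fun x => (Z.map (fun z => x - z)).prod) =
          fun x => ((Z.map (fun z => (Polynomial.X - Polynomial.C z : ℂ[X]))).prod).eval x := by
        funext x
        rw [Polynomial.eval_multiset_prod, Multiset.map_map]
        simp
      rw [this]
      exact AnalyticAt.aeval_polynomial (analyticAt_id) _
    have hGs : ∀ x ∈ sphere (0 : ℂ) a, G x ≠ 0 := by
      intro x hx
      refine mul_ne_zero ?_ (hU0 x (sphere_subset_closedBall hx))
      rw [Ne, Multiset.prod_eq_zero_iff]
      intro h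
      obtain ⟨w, hw, hw'⟩ := Multiset.mem_map.1 h
      have h1 := hZ w (Multiset.mem_cons_of_mem hw)
      rw [sub_eq_zero] at hw'
      subst hw'
      simp at h1 hx
      linarith
    have hxz : ∀ x ∈ sphere (0 : ℂ) a, x - z ≠ 0 := by
      intro x hx h
      rw [sub_eq_zero] at h
      subst h
      simp at hz hx
      linarith
    have e1 : (∮ x in C(0, a), φ x * (deriv F x / F x)) =
        ∮ x in C(0, a), ((x - z)⁻¹ • φ x + φ x * (deriv G x / G x)) := by
      refine circleIntegral.integral_congr ha.le fun x hx => ?_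
      have hd : deriv F x = G x + (x - z) * deriv G x := by
        rw [hFG]
        have := ((hasDerivAt_id' x).sub_const z).fun_mul
          (hGa x (sphere_subset_closedBall hx)).differentiableAt.hasDerivAt
        simpa using this.deriv
      have h1 := hGs x hx
      have h2 := hxz x hx
      simp only [hd, smul_eq_mul]
      rw [show F x = (x - z) * G x from congrFun hFG x]
      field_simp
    have c1 : CircleIntegrable (fun x => (x - z)⁻¹ • φ x) 0 a := by
      refine ContinuousOn.circleIntegrable ha.le ?_
      refine ContinuousOn.fun_smul ?_ (hφ.continuousOn.mono sphere_subset_closedBall)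
      exact ContinuousOn.inv₀ (by fun_prop) hxz
    have c2 : CircleIntegrable (fun x => φ x * (deriv G x / G x)) 0 a := by
      refine ContinuousOn.circleIntegrable ha.le ?_
      intro x hx
      have hx' := sphere_subset_closedBall hx
      exact ((hφ x hx').mul (((hGa x hx').deriv).div (hGa x hx')
        (hGs x hx))).continuousAt.continuousWithinAt
    rw [e1, circleIntegral.integral_add c1 c2, ih G hGfac]
    have hd : DifferentiableOn ℂ φ (closedBall 0 a) := hφ.differentiableOn
    have := hd.circleIntegral_sub_inv_smul hz
    rw [this]
    simp [mul_add]

lemma integral_zs {a : ℝ} (ha : 0 < a) {φ : ℂ → ℂ} (hφ : AnalyticOnNhd ℂ φ (closedBall 0 a))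
    {F : ℂ → ℂ} (hF : NV a F) :
    (∮ x in C(0, a), φ x * (deriv F x / F x)) = 2 * Real.pi * Complex.I * ((zs a F).map φ).sum :=
  integral_fac ha hφ _ F (zs_spec ha hF)

/-- Rouché. -/
lemma rouche {a : ℝ} (ha : 0 < a) {F G : ℂ → ℂ} (hF : NV a F)
    (hG : AnalyticOnNhd ℂ G (closedBall 0 a))
    (h : ∀ x ∈ sphere (0 : ℂ) a, ‖G x - F x‖ < ‖F x‖) :
    NV a G ∧ (zs a G).card = (zs a F).card := by
  have hG' : NV a G := by
    refine ⟨hG, fun x hx h0 => ?_⟩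
    have := h x hx
    simp [h0] at this
  refine ⟨hG', ?_⟩
  have i1 := integral_zs ha (φ := fun _ => 1) (fun x _ => analyticAt_const) hF
  have i2 := integral_zs ha (φ := fun _ => 1) (fun x _ => analyticAt_const) hG'
  simp only [one_mul, Multiset.map_const', Multiset.sum_replicate, nsmul_eq_mul, mul_one] at i1 i2
  have cF : CircleIntegrable (fun x => deriv F x / F x) 0 a := by
    refine ContinuousOn.circleIntegrable ha.le ?_
    intro x hx
    have hx' := sphere_subset_closedBall hx
    exact (((hF.1 x hx').deriv).div (hF.1 x hx') (hF.2 x hx)).continuousAt.continuousWithinAt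
  have cG : CircleIntegrable (fun x => deriv G x / G x) 0 a := by
    refine ContinuousOn.circleIntegrable ha.le ?_
    intro x hx
    have hx' := sphere_subset_closedBall hx
    exact (((hG x hx').deriv).div (hG x hx') (hG'.2 x hx)).continuousAt.continuousWithinAt
  have e : (∮ x in C(0, a), (deriv G x / G x - deriv F x / F x)) = 0 := by
    refine circleIntegral.integral_eq_zero_of_hasDerivWithinAt (f := fun x => Complex.log (G x / F x))
      ha.le fun x hx => ?_
    have hx' := sphere_subset_closedBall hx
    have hF0 := hF.2 x hx
    have hG0 := hG'.2 x hx
    have d := ((hG x hx').differentiableAt.hasDerivAt).div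
      ((hF.1 x hx').differentiableAt.hasDerivAt) hF0
    have hs : G x / F x ∈ Complex.slitPlane := by
      apply Complex.ball_one_subset_slitPlane
      rw [mem_ball, dist_eq_norm]
      have : G x / F x - 1 = (G x - F x) / F x := by field_simp
      rw [this, norm_div, div_lt_one (norm_pos_iff.2 hF0)]
      exact h x hx
    have := (d.clog hs).hasDerivWithinAt (s := sphere 0 a)
    convert this using 1
    · rfl
    · rw [show (G / F) x = G x / F x from rfl]
      field_simp
  rw [circleIntegral.integral_sub cG cF, i1, i2, ← mul_sub] at e
  have h2 : (2 * Real.pi * Complex.I : ℂ) ≠ 0 := Complex.two_pi_I_ne_zero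
  have := (mul_eq_zero.1 e).resolve_left h2
  exact_mod_cast sub_eq_zero.1 this


/-! ### Newton identities -/

lemma newton (W : Multiset ℂ) (k : ℕ) :
    (k : ℂ) * W.esymm k = (-1) ^ (k + 1) *
      ∑ a ∈ Finset.HasAntidiagonal.antidiagonal k with a.1 < k,
        (-1) ^ a.1 * W.esymm a.1 * (W.map (fun x => x ^ a.2)).sum := by
  obtain ⟨n, f, rfl⟩ : ∃ n : ℕ, ∃ f : Fin n → ℂ, W = Finset.univ.val.map f := by
    induction W using Quot.inductionOn with
    | h l =>
      refine ⟨l.length, l.get, ?_⟩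
      simp [Fin.univ_val_map]
  have h := congrArg (MvPolynomial.aeval f) (MvPolynomial.mul_esymm_eq_sum (Fin n) ℂ k)
  simp only [map_mul, map_natCast, map_pow, map_neg, map_one, map_sum,
    MvPolynomial.aeval_esymm_eq_multiset_esymm, MvPolynomial.psum, MvPolynomial.aeval_X] at h
  rw [h]
  simp only [Multiset.map_map]
  rfl

lemma diff_esymm {E : Type*} [NormedAddCommGroup E] [NormedSpace ℂ E] {W : E → Multiset ℂ} {e₀ : E}
    (h : ∀ j, DifferentiableAt ℂ (fun e => ((W e).map (fun x => x ^ j)).sum) e₀) (k : ℕ) :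
    DifferentiableAt ℂ (fun e => (W e).esymm k) e₀ := by
  induction k using Nat.strong_induction_on with
  | _ k ih =>
    rcases Nat.eq_zero_or_pos k with rfl | hk
    · simp [Multiset.esymm]
    · have hk' : (k : ℂ) ≠ 0 := by exact_mod_cast hk.ne'
      have : (fun e => (W e).esymm k) = fun e => (k : ℂ)⁻¹ * ((-1) ^ (k + 1) *
          ∑ a ∈ Finset.HasAntidiagonal.antidiagonal k with a.1 < k,
          (-1) ^ a.1 * (W e).esymm a.1 * ((W e).map (fun x => x ^ a.2)).sum) := by
        funext e
        rw [← newton]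
        field_simp
      rw [this]
      refine DifferentiableAt.const_mul (DifferentiableAt.const_mul ?_ _) _
      refine DifferentiableAt.fun_sum fun a ha => ?_
      have ha' := (Finset.mem_filter.1 ha).2
      exact ((ih a.1 ha').const_mul _).mul (h a.2)

/-! ### Orders of zeros -/

lemma theta_one {α : Type*} {l : Filter α} {f : α → ℂ} {c : ℂ} (h : Tendsto f l (𝓝 c))
    (hc : c ≠ 0) : f =Θ[l] fun _ => (1 : ℂ) :=
  ((isEquivalent_const_iff_tendsto hc).2 h).isTheta.trans (isTheta_const_const hc one_ne_zero)

lemma pow_sub_le {y₀ : ℂ} {m n : ℕ}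
    (h : (fun y : ℂ => (y - y₀) ^ n) =O[𝓝 y₀] fun y => (y - y₀) ^ m) : m ≤ n := by
  by_contra hlt
  push Not at hlt
  have h2 := isLittleO_pow_sub_pow_sub y₀ hlt
  simp only [← norm_pow] at h2
  have h3 := h.trans_isLittleO h2.of_norm_norm
  refine isLittleO_irrefl (f'' := fun y : ℂ => (y - y₀) ^ n) (l := 𝓝 y₀) ?_ h3
  have : ∃ᶠ y in 𝓝[≠] y₀, (y - y₀) ^ n ≠ 0 := by
    refine Eventually.frequently ?_
    filter_upwards [self_mem_nhdsWithin] with y hy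
    exact pow_ne_zero _ (sub_ne_zero.2 hy)
  exact this.filter_mono nhdsWithin_le_nhds

lemma zs_theta {a : ℝ} (ha : 0 < a) {F : ℂ → ℂ} (hF : NV a F) {y₀ : ℂ} (hy : y₀ ∈ ball (0 : ℂ) a) :
    F =Θ[𝓝 y₀] fun y => (y - y₀) ^ (zs a F).count y₀ := by
  obtain ⟨h1, U, hU, hU0, hFU⟩ := zs_spec ha hF
  set Z := zs a F
  set Z' := Z.filter (fun z => ¬ y₀ = z)
  have hFV : F = fun y => (y - y₀) ^ Z.count y₀ * ((Z'.map (fun z => y - z)).prod * U y) := by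
    funext y
    rw [hFU y]
    conv_lhs => rw [← Multiset.filter_add_not (fun z => y₀ = z) Z]
    rw [Multiset.filter_eq]
    simp [Z', mul_assoc]
  have hc : ContinuousAt (fun y => (Z'.map (fun z => y - z)).prod * U y) y₀ := by
    refine ContinuousAt.mul ?_ (hU y₀ (ball_subset_closedBall hy)).continuousAt
    refine Continuous.continuousAt ?_
    exact continuous_multiset_prod _ (fun z _ => by fun_prop)
  have hne : (Z'.map (fun z => y₀ - z)).prod * U y₀ ≠ 0 := by
    refine mul_ne_zero ?_ (hU0 _ (ball_subset_closedBall hy))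
    rw [Ne, Multiset.prod_eq_zero_iff]
    intro h
    obtain ⟨w, hw, hw'⟩ := Multiset.mem_map.1 h
    exact (Multiset.mem_filter.1 hw).2 (sub_eq_zero.1 hw')
  have := (isTheta_refl (fun y => (y - y₀) ^ Z.count y₀) (𝓝 y₀)).mul (theta_one hc.tendsto hne)
  rw [hFV]
  simpa using this

lemma le_count {a : ℝ} (ha : 0 < a) {F : ℂ → ℂ} (hF : NV a F) {y₀ : ℂ} (hy : y₀ ∈ ball (0 : ℂ) a)
    {n : ℕ} (h : F =O[𝓝 y₀] fun y => (y - y₀) ^ n) : n ≤ (zs a F).count y₀ :=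
  pow_sub_le ((zs_theta ha hF hy).2.trans h)

lemma count_le {a : ℝ} (ha : 0 < a) {F : ℂ → ℂ} (hF : NV a F) {y₀ : ℂ} (hy : y₀ ∈ ball (0 : ℂ) a)
    {n : ℕ} (h : (fun y => (y - y₀) ^ n) =O[𝓝 y₀] F) : (zs a F).count y₀ ≤ n :=
  pow_sub_le (h.trans (zs_theta ha hF hy).1)

/-! ### Jensen type bounds -/

lemma norm_prod_le (Z : Multiset ℂ) (x : ℂ) {M : ℝ} (h : ∀ z ∈ Z, ‖x - z‖ ≤ M) :
    ‖(Z.map (fun z => x - z)).prod‖ ≤ M ^ Z.card := by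
  induction Z using Multiset.induction_on with
  | empty => simp
  | cons z Z ih =>
    have h1 := ih fun w hw => h w (Multiset.mem_cons_of_mem hw)
    have h2 := h z (Multiset.mem_cons_self z Z)
    simp only [Multiset.map_cons, Multiset.prod_cons, norm_mul, Multiset.card_cons, pow_succ']
    exact mul_le_mul h2 h1 (norm_nonneg _) ((norm_nonneg _).trans h2)

lemma le_norm_prod (Z : Multiset ℂ) (x : ℂ) {M : ℝ} (hM : 0 ≤ M) (h : ∀ z ∈ Z, M ≤ ‖x - z‖) :
    M ^ Z.card ≤ ‖(Z.map (fun z => x - z)).prod‖ := by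
  induction Z using Multiset.induction_on with
  | empty => simp
  | cons z Z ih =>
    have h1 := ih fun w hw => h w (Multiset.mem_cons_of_mem hw)
    have h2 := h z (Multiset.mem_cons_self z Z)
    simp only [Multiset.map_cons, Multiset.prod_cons, norm_mul, Multiset.card_cons, pow_succ']
    exact mul_le_mul h2 h1 (by positivity) (norm_nonneg _)

lemma max_mod {a : ℝ} (ha : 0 < a) {U : ℂ → ℂ} (hU : AnalyticOnNhd ℂ U (closedBall 0 a)) {C : ℝ}
    (h : ∀ x ∈ sphere (0 : ℂ) a, ‖U x‖ ≤ C) {c : ℂ} (hc : c ∈ closedBall (0 : ℂ) a) : ‖U c‖ ≤ C := by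
  refine Complex.norm_le_of_forall_mem_frontier_norm_le (U := ball 0 a) isBounded_ball ?_ ?_ ?_
  · refine DifferentiableOn.diffContOnCl ?_
    rw [closure_ball _ ha.ne']
    exact hU.differentiableOn
  · rw [frontier_ball _ ha.ne']; exact h
  · rwa [closure_ball _ ha.ne']

lemma jensen_lower {a : ℝ} (ha : 0 < a) {F : ℂ → ℂ} (hF : NV a F) {μ : ℝ} (hμ : 0 < μ)
    (h : ∀ x ∈ sphere (0 : ℂ) a, μ ≤ ‖F x‖) {c : ℂ} (hc : c ∈ closedBall (0 : ℂ) a) :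
    ‖((zs a F).map (fun z => c - z)).prod‖ ≤ (2 * a) ^ (zs a F).card / μ * ‖F c‖ := by
  obtain ⟨h1, U, hU, hU0, hFU⟩ := zs_spec ha hF
  set Z := zs a F
  have hb : ‖(U c)⁻¹‖ ≤ (2 * a) ^ Z.card / μ := by
    refine max_mod ha (U := fun x => (U x)⁻¹) (fun x hx => (hU x hx).inv (hU0 x hx)) ?_ hc
    intro x hx
    have hUx := hU0 x (sphere_subset_closedBall hx)
    have h2 := h x hx
    rw [hFU, norm_mul] at h2
    have h3 : ‖(Z.map (fun z => x - z)).prod‖ ≤ (2 * a) ^ Z.card := by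
      refine norm_prod_le Z x fun z hz => ?_
      have := h1 z hz
      simp at this hx
      linarith [norm_sub_le x z]
    rw [norm_inv, inv_eq_one_div, div_le_div_iff₀ (norm_pos_iff.2 hUx) hμ]
    rw [one_mul]
    exact h2.trans (mul_le_mul_of_nonneg_right h3 (norm_nonneg _))
  have hUc := norm_pos_iff.2 (hU0 c hc)
  rw [hFU c, norm_mul]
  rw [norm_inv] at hb
  calc _ = ‖U c‖⁻¹ * (‖(Z.map (fun z => c - z)).prod‖ * ‖U c‖) := by field_simp
    _ ≤ _ := by gcongr

lemma jensen_upper {a : ℝ} (ha : 0 < a) {F : ℂ → ℂ} (hF : NV a F) {M η : ℝ} (hη : 0 < η)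
    (h : ∀ x ∈ sphere (0 : ℂ) a, ‖F x‖ ≤ M) (hz : ∀ z ∈ zs a F, ‖z‖ ≤ a - η)
    {c : ℂ} (hc : c ∈ closedBall (0 : ℂ) a) :
    ‖F c‖ ≤ M / η ^ (zs a F).card * ‖((zs a F).map (fun z => c - z)).prod‖ := by
  obtain ⟨h1, U, hU, hU0, hFU⟩ := zs_spec ha hF
  set Z := zs a F
  have hb : ‖U c‖ ≤ M / η ^ Z.card := by
    refine max_mod ha hU ?_ hc
    intro x hx
    have h2 := h x hx
    rw [hFU, norm_mul] at h2
    have h3 : η ^ Z.card ≤ ‖(Z.map (fun z => x - z)).prod‖ := by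
      refine le_norm_prod Z x hη.le fun z hz' => ?_
      have := hz z hz'
      simp at hx
      linarith [norm_sub_norm_le x z]
    rw [le_div_iff₀ (by positivity)]
    calc ‖U x‖ * η ^ Z.card ≤ ‖U x‖ * ‖(Z.map (fun z => x - z)).prod‖ := by gcongr
      _ ≤ M := by rw [mul_comm]; exact h2
  rw [hFU c, norm_mul, mul_comm]
  gcongr


/-! ### Families -/

section Families

variable {E : Type*} [NormedAddCommGroup E] [NormedSpace ℂ E]

/-- Product of the values of `h` at the zeros of `f (·, e)` in the disc. -/
def Rh (f h : ℂ × E → ℂ) (a : ℝ) (e : E) : ℂ :=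
  ((zs a (fun x => f (x, e))).map (fun x => h (x, e))).prod

/-- `f` is analytic along the closed disc over `e` and non vanishing on the circle. -/
def Good (f : ℂ × E → ℂ) (a : ℝ) (e : E) : Prop :=
  (∀ x ∈ closedBall (0 : ℂ) a, AnalyticAt ℂ f (x, e)) ∧ ∀ x ∈ sphere (0 : ℂ) a, f (x, e) ≠ 0

lemma analytic_slice {f : ℂ × E → ℂ} {x : ℂ} {e : E} (h : AnalyticAt ℂ f (x, e)) :
    AnalyticAt ℂ (fun x => f (x, e)) x :=
  AnalyticAt.fun_comp (f := fun x : ℂ => (x, e)) (g := f) h (by fun_prop)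

lemma Good.nv {f : ℂ × E → ℂ} {a : ℝ} {e : E} (h : Good f a e) : NV a (fun x => f (x, e)) :=
  ⟨fun x hx => analytic_slice (h.1 x hx), h.2⟩

lemma compact_ev {K : Set ℂ} (hK : IsCompact K) {e₀ : E} {P : ℂ × E → Prop}
    (h : ∀ x ∈ K, ∀ᶠ p in 𝓝 (x, e₀), P p) : ∀ᶠ e in 𝓝 e₀, ∀ x ∈ K, P (x, e) := by
  refine hK.eventually_forall_of_forall_eventually (P := fun e x => P (x, e)) fun x hx => ?_
  have := (continuous_swap.tendsto (e₀, x)).eventually (h x hx)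
  exact this

lemma analytic_ev {f : ℂ × E → ℂ} {a : ℝ} {e₀ : E}
    (h : ∀ x ∈ closedBall (0 : ℂ) a, AnalyticAt ℂ f (x, e₀)) :
    ∀ᶠ e in 𝓝 e₀, ∀ x ∈ closedBall (0 : ℂ) a, AnalyticAt ℂ f (x, e) :=
  compact_ev (isCompact_closedBall 0 a) fun x hx => (h x hx).eventually_analyticAt

lemma Good.ev {f : ℂ × E → ℂ} {a : ℝ} {e₀ : E} (h : Good f a e₀) : ∀ᶠ e in 𝓝 e₀, Good f a e := by
  filter_upwards [analytic_ev h.1, compact_ev (isCompact_sphere (0 : ℂ) a) (P := fun p => f p ≠ 0)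
    fun x hx => (h.1 x (sphere_subset_closedBall hx)).continuousAt.eventually_ne (h.2 x hx)]
    with e h1 h2 using ⟨h1, h2⟩

lemma compact_bound {K : Set ℂ} (hK : IsCompact K) {e₀ : E} {P : ℝ → ℂ × E → Prop}
    (hmono : ∀ C D p, C ≤ D → P C p → P D p)
    (h : ∀ x ∈ K, ∃ C, ∀ᶠ p in 𝓝 (x, e₀), P C p) :
    ∃ C, ∀ᶠ e in 𝓝 e₀, ∀ x ∈ K, P C (x, e) := by
  refine hK.induction_on (p := fun S => ∃ C, ∀ᶠ e in 𝓝 e₀, ∀ x ∈ S, P C (x, e)) ⟨0, by simp⟩ ?_ ?_ ?_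
  · rintro s t hst ⟨C, hC⟩
    exact ⟨C, hC.mono fun e he x hx => he x (hst hx)⟩
  · rintro s t ⟨C, hC⟩ ⟨D, hD⟩
    refine ⟨max C D, ?_⟩
    filter_upwards [hC, hD] with e h1 h2 x hx
    rcases hx with hx | hx
    · exact hmono _ _ _ (le_max_left _ _) (h1 x hx)
    · exact hmono _ _ _ (le_max_right _ _) (h2 x hx)
  · intro x hx
    obtain ⟨C, hC⟩ := h x hx
    rw [nhds_prod_eq] at hC
    obtain ⟨s, hs, t, ht, hst⟩ := Filter.mem_prod_iff.1 hC
    refine ⟨s, mem_nhdsWithin_of_mem_nhds hs, C, ?_⟩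
    filter_upwards [ht] with e he x hx
    exact hst (Set.mk_mem_prod hx he)

lemma card_ev {f : ℂ × E → ℂ} {a : ℝ} (ha : 0 < a) {e₀ : E} (h : Good f a e₀) :
    ∀ᶠ e in 𝓝 e₀, (zs a (fun x => f (x, e))).card = (zs a (fun x => f (x, e₀))).card := by
  have h1 : ∀ᶠ e in 𝓝 e₀, ∀ x ∈ sphere (0 : ℂ) a,
      ‖f (x, e) - f (x, e₀)‖ < ‖f (x, e₀)‖ := by
    refine compact_ev (isCompact_sphere (0 : ℂ) a)
      (P := fun p => ‖f p - f (p.1, e₀)‖ < ‖f (p.1, e₀)‖) fun x hx => ?_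
    have c1 := (h.1 x (sphere_subset_closedBall hx)).continuousAt
    have c2 : ContinuousAt (fun p : ℂ × E => f (p.1, e₀)) (x, e₀) :=
      ContinuousAt.comp (f := fun p : ℂ × E => (p.1, e₀)) (g := f) c1 (by fun_prop)
    refine (ContinuousAt.tendsto (f := fun p => ‖f p - f (p.1, e₀)‖) (c1.sub c2).norm).eventually_lt
      (ContinuousAt.tendsto c2.norm) ?_
    simpa using h.2 x hx
  filter_upwards [h1, h.ev] with e he hg
  exact (rouche ha h.nv hg.nv.1 he).2

lemma prod_norm_le (Z : Multiset ℂ) (h κ : ℂ → ℂ) {C : ℝ} (hC : 0 ≤ C)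
    (H : ∀ z ∈ Z, ‖h z‖ ≤ C * ‖κ z‖) : ‖(Z.map h).prod‖ ≤ C ^ Z.card * ‖(Z.map κ).prod‖ := by
  induction Z using Multiset.induction_on with
  | empty => simp
  | cons z Z ih =>
    have h1 := ih fun w hw => H w (Multiset.mem_cons_of_mem hw)
    have h2 := H z (Multiset.mem_cons_self z Z)
    simp only [Multiset.map_cons, Multiset.prod_cons, norm_mul, Multiset.card_cons, pow_succ']
    calc _ ≤ (C * ‖κ z‖) * (C ^ Z.card * ‖(Z.map κ).prod‖) := by gcongr
      _ = _ := by ring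

lemma Rh_isBigO {f h κ : ℂ × E → ℂ} {a : ℝ} (ha : 0 < a) {e₀ : E} (hg : Good f a e₀)
    (H : ∀ x ∈ ball (0 : ℂ) a, f (x, e₀) = 0 → h =O[𝓝 (x, e₀) ⊓ 𝓟 {p | f p = 0}] κ) :
    Rh f h a =O[𝓝 e₀] Rh f κ a := by
  obtain ⟨C, hC⟩ := compact_bound (isCompact_closedBall (0 : ℂ) a) (e₀ := e₀)
    (P := fun C p => f p = 0 → ‖h p‖ ≤ max C 0 * ‖κ p‖)
    (fun C D p hCD hp h0 => (hp h0).trans (by gcongr)) (by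
      intro x hx
      by_cases h0 : f (x, e₀) = 0
      · have hxb : x ∈ ball (0 : ℂ) a := by
          rcases (mem_closedBall.1 hx).lt_or_eq with h1 | h1
          · exact h1
          · exact absurd h0 (hg.2 x h1)
        obtain ⟨C, hC⟩ := (H x hxb h0).bound
        refine ⟨C, ?_⟩
        rw [eventually_inf_principal] at hC
        filter_upwards [hC] with p hp hp0
        exact (hp hp0).trans (by gcongr; exact le_max_left _ _)
      · refine ⟨0, ?_⟩
        filter_upwards [(hg.1 x hx).continuousAt.eventually_ne h0] with p hp hp0
        exact absurd hp0 hp)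
  refine IsBigO.of_bound ((max C 0) ^ (zs a (fun x => f (x, e₀))).card) ?_
  filter_upwards [hC, hg.ev, card_ev ha hg] with e h1 h2 h3
  rw [← h3]
  refine prod_norm_le _ _ _ (le_max_right _ _) fun z hz => ?_
  rw [mem_zs ha h2.nv] at hz
  exact h1 z (ball_subset_closedBall hz.1) hz.2

lemma Rh_isTheta {f h κ : ℂ × E → ℂ} {a : ℝ} (ha : 0 < a) {e₀ : E} (hg : Good f a e₀)
    (H : ∀ x ∈ ball (0 : ℂ) a, f (x, e₀) = 0 → h =Θ[𝓝 (x, e₀) ⊓ 𝓟 {p | f p = 0}] κ) :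
    Rh f h a =Θ[𝓝 e₀] Rh f κ a :=
  ⟨Rh_isBigO ha hg fun x hx h0 => (H x hx h0).1, Rh_isBigO ha hg fun x hx h0 => (H x hx h0).2⟩

lemma Rh_linear {f : ℂ × E → ℂ} {a : ℝ} (ha : 0 < a) {e₀ : E} (hg : Good f a e₀) {ξ : E → ℂ}
    (hξ : ContinuousAt ξ e₀) (hξ0 : ξ e₀ ∈ ball (0 : ℂ) a) :
    Rh f (fun p => p.1 - ξ p.2) a =Θ[𝓝 e₀] fun e => f (ξ e, e) := by
  set k := (zs a (fun x => f (x, e₀))).card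
  have hξe : ∀ᶠ e in 𝓝 e₀, ξ e ∈ ball (0 : ℂ) a := hξ.eventually (isOpen_ball.mem_nhds hξ0)
  have hsw : ∀ e, ‖Rh f (fun p => p.1 - ξ p.2) a e‖ =
      ‖((zs a (fun x => f (x, e))).map (fun z => ξ e - z)).prod‖ := by
    intro e
    have h1 := prod_norm_le (zs a (fun x => f (x, e))) (fun z => z - ξ e) (fun z => ξ e - z)
      zero_le_one (fun z _ => by rw [one_mul, norm_sub_rev])
    have h2 := prod_norm_le (zs a (fun x => f (x, e))) (fun z => ξ e - z) (fun z => z - ξ e)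
      zero_le_one (fun z _ => by rw [one_mul, norm_sub_rev])
    rw [one_pow, one_mul] at h1 h2
    exact le_antisymm h1 h2
  constructor
  · -- lower bound of `f` on the circle
    obtain ⟨C, hC⟩ := compact_bound (isCompact_sphere (0 : ℂ) a) (e₀ := e₀)
      (P := fun C p => 1 ≤ max C 1 * ‖f p‖)
      (fun C D p hCD hp => hp.trans (by gcongr)) (by
        intro x hx
        have hc := (hg.1 x (sphere_subset_closedBall hx)).continuousAt.norm
        have hpos : 0 < ‖f (x, e₀)‖ := norm_pos_iff.2 (hg.2 x hx)
        refine ⟨2 / ‖f (x, e₀)‖, ?_⟩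
        filter_upwards [hc.eventually (lt_mem_nhds (half_lt_self hpos))] with p hp
        calc (1 : ℝ) = 2 / ‖f (x, e₀)‖ * (‖f (x, e₀)‖ / 2) := by field_simp
          _ ≤ _ := by
            gcongr
            exact le_max_left _ _)
    refine IsBigO.of_bound ((2 * a) ^ k / (max C 1)⁻¹) ?_
    filter_upwards [hC, hg.ev, card_ev ha hg, hξe] with e h1 h2 h3 h4
    have h3' : _ = k := h3
    rw [hsw, ← h3']
    refine jensen_lower ha h2.nv (by positivity) (fun x hx => ?_) (ball_subset_closedBall h4)
    have := h1 x hx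
    rw [inv_eq_one_div, div_le_iff₀ (by positivity), mul_comm]
    exact this
  · obtain ⟨C, hC⟩ := compact_bound (isCompact_sphere (0 : ℂ) a) (e₀ := e₀)
      (P := fun C p => ‖f p‖ ≤ C)
      (fun C D p hCD hp => hp.trans hCD) (by
        intro x hx
        have hc := (hg.1 x (sphere_subset_closedBall hx)).continuousAt.norm
        refine ⟨‖f (x, e₀)‖ + 1, ?_⟩
        filter_upwards [hc.eventually (gt_mem_nhds (lt_add_one _))] with p hp using hp.le)
    obtain ⟨D, hD⟩ := compact_bound (isCompact_closedBall (0 : ℂ) a) (e₀ := e₀)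
      (P := fun D p => f p = 0 → ‖p.1‖ ≤ a - (max D 1)⁻¹)
      (fun C D p hCD hp h0 => (hp h0).trans (by gcongr)) (by
        intro x hx
        by_cases h0 : f (x, e₀) = 0
        · have hxb : ‖x‖ < a := by
            rcases (mem_closedBall.1 hx).lt_or_eq with h1 | h1
            · simpa using h1
            · exact absurd h0 (hg.2 x h1)
          have hδ : 0 < (a - ‖x‖) / 2 := by linarith
          refine ⟨((a - ‖x‖) / 2)⁻¹, ?_⟩
          have hc : ContinuousAt (fun p : ℂ × E => ‖p.1‖) (x, e₀) := by fun_prop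
          have : ‖x‖ < ‖x‖ + (a - ‖x‖) / 2 := by linarith
          filter_upwards [hc.eventually (gt_mem_nhds this)] with p hp _
          have h2 : (max (((a - ‖x‖) / 2)⁻¹) 1)⁻¹ ≤ (a - ‖x‖) / 2 := by
            rw [inv_le_comm₀ (by positivity) hδ]
            exact le_max_left _ _
          have hp' : ‖p.1‖ < ‖x‖ + (a - ‖x‖) / 2 := hp
          linarith
        · refine ⟨0, ?_⟩
          filter_upwards [(hg.1 x hx).continuousAt.eventually_ne h0] with p hp hp0
          exact absurd hp0 hp)
    refine IsBigO.of_bound (C / ((max D 1)⁻¹) ^ k) ?_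
    filter_upwards [hC, hD, hg.ev, card_ev ha hg, hξe] with e h1 h1' h2 h3 h4
    have h3' : _ = k := h3
    rw [hsw, ← h3']
    refine jensen_upper ha h2.nv (by positivity) h1 (fun z hz => ?_) (ball_subset_closedBall h4)
    rw [mem_zs ha h2.nv] at hz
    exact h1' z (ball_subset_closedBall hz.1) hz.2

/-- Differentiation under the circle integral. -/
lemma diff_circle {G : ℂ × E → ℂ} {a : ℝ} (ha : 0 < a) {e₀ : E}
    (hG : ∀ x ∈ sphere (0 : ℂ) a, AnalyticAt ℂ G (x, e₀)) :
    DifferentiableAt ℂ (fun e => ∮ x in C(0, a), G (x, e)) e₀ := by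
  have hev : ∀ᶠ e in 𝓝 e₀, ∀ x ∈ sphere (0 : ℂ) a, AnalyticAt ℂ G (x, e) :=
    compact_ev (isCompact_sphere 0 a) fun x hx => (hG x hx).eventually_analyticAt
  obtain ⟨C, hC⟩ := compact_bound (isCompact_sphere (0 : ℂ) a) (e₀ := e₀)
    (P := fun C p => ‖fderiv ℂ G p‖ ≤ C) (fun C D p hCD hp => hp.trans hCD) (by
      intro x hx
      have hc := (hG x hx).fderiv.continuousAt.norm
      refine ⟨‖fderiv ℂ G (x, e₀)‖ + 1, ?_⟩
      filter_upwards [hc.eventually (gt_mem_nhds (lt_add_one _))] with p hp using hp.le)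
  have hmem : ∀ θ : ℝ, circleMap 0 a θ ∈ sphere (0 : ℂ) a := fun θ => circleMap_mem_sphere 0 ha.le θ
  have hcont : ∀ e, (∀ x ∈ sphere (0 : ℂ) a, AnalyticAt ℂ G (x, e)) →
      Continuous (fun θ : ℝ => deriv (circleMap 0 a) θ • G (circleMap 0 a θ, e)) := by
    intro e he
    refine Continuous.smul (f := fun θ : ℝ => deriv (circleMap 0 a) θ) ?_ ?_
    · simp only [deriv_circleMap]; fun_prop
    · rw [continuous_iff_continuousAt]
      intro θ
      exact ContinuousAt.comp (f := fun θ : ℝ => (circleMap 0 a θ, e)) (g := G)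
        (he _ (hmem θ)).continuousAt (by fun_prop)
  set F' : E → ℝ → E →L[ℂ] ℂ := fun e θ => deriv (circleMap 0 a) θ •
    (fderiv ℂ G (circleMap 0 a θ, e)).comp (ContinuousLinearMap.inr ℂ ℂ E) with hF'
  have hcont' : Continuous (F' e₀) := by
    refine Continuous.smul (f := fun θ : ℝ => deriv (circleMap 0 a) θ) ?_ ?_
    · simp only [deriv_circleMap]; fun_prop
    · refine Continuous.clm_comp ?_ continuous_const
      rw [continuous_iff_continuousAt]
      intro θ
      exact ContinuousAt.comp (f := fun θ : ℝ => (circleMap 0 a θ, e₀)) (g := fderiv ℂ G)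
        (hG _ (hmem θ)).fderiv.continuousAt (by fun_prop)
  have := intervalIntegral.hasFDerivAt_integral_of_dominated_of_fderiv_le (μ := MeasureTheory.volume)
    (𝕜 := ℂ) (a := 0) (b := 2 * Real.pi)
    (F := fun e θ => deriv (circleMap 0 a) θ • G (circleMap 0 a θ, e)) (F' := F') (x₀ := e₀)
    (bound := fun _ => a * (C * ‖ContinuousLinearMap.inr ℂ ℂ E‖)) (hev.and hC)
    (hev.mono fun e he => (hcont e he).aestronglyMeasurable)
    ((hcont e₀ hG).intervalIntegrable _ _) hcont'.aestronglyMeasurable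
    (Eventually.of_forall fun θ _ e he => by
      have h1 := he.2 _ (hmem θ)
      simp only [hF', norm_smul, deriv_circleMap]
      simp only [norm_mul, norm_circleMap_zero, Complex.norm_I, mul_one, abs_of_pos ha]
      gcongr
      refine (ContinuousLinearMap.opNorm_comp_le _ _).trans ?_
      gcongr)
    (by simp)
    (Eventually.of_forall fun θ _ e he => by
      have h1 := (he.1 _ (hmem θ)).differentiableAt.hasFDerivAt
      have h2 : HasFDerivAt (fun e : E => ((circleMap 0 a θ : ℂ), e))
        (ContinuousLinearMap.inr ℂ ℂ E) e := by
        exact hasFDerivAt_prodMk_right _ _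
      exact (HasFDerivAt.comp e h1 h2).const_smul (deriv (circleMap 0 a) θ))
  exact this.differentiableAt

lemma Rh_diff {f h : ℂ × E → ℂ} {a : ℝ} (ha : 0 < a) {e₀ : E} (hg : Good f a e₀)
    (hh : ∀ x ∈ closedBall (0 : ℂ) a, AnalyticAt ℂ h (x, e₀)) :
    DifferentiableAt ℂ (Rh f h a) e₀ := by
  set k := (zs a (fun x => f (x, e₀))).card with hk
  set W : E → Multiset ℂ := fun e => (zs a (fun x => f (x, e))).map (fun x => h (x, e)) with hW
  have hp : ∀ j, DifferentiableAt ℂ (fun e => ((W e).map (fun x => x ^ j)).sum) e₀ := by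
    intro j
    set G : ℂ × E → ℂ := fun p => h p ^ j * (fderiv ℂ f p (1, 0) / f p) with hGdef
    have hd := (diff_circle (G := G) ha (e₀ := e₀) fun x hx => by
      have hx' := sphere_subset_closedBall hx
      refine ((hh x hx').pow j).mul (AnalyticAt.div ?_ (hg.1 x hx') (hg.2 x hx))
      exact ((ContinuousLinearMap.apply ℂ ℂ ((1, 0) : ℂ × E)).analyticAt _).comp (hg.1 x hx').fderiv
      ).const_mul (2 * Real.pi * Complex.I : ℂ)⁻¹
    refine hd.congr_of_eventuallyEq ?_
    filter_upwards [hg.ev, analytic_ev hh] with e h1 h2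
    have hi := integral_zs ha (φ := fun x => h (x, e) ^ j)
      (fun x hx => (analytic_slice (h2 x hx)).pow j) h1.nv
    have hcongr : (∮ x in C(0, a), G (x, e)) =
        ∮ x in C(0, a), h (x, e) ^ j * (deriv (fun x => f (x, e)) x / f (x, e)) := by
      refine circleIntegral.integral_congr ha.le fun x hx => ?_
      have h3 := (h1.1 x (sphere_subset_closedBall hx)).differentiableAt.hasFDerivAt
      have h4 : HasDerivAt (fun x : ℂ => (x, e)) ((1, 0) : ℂ × E) x :=
        (hasDerivAt_id x).prodMk (hasDerivAt_const x e)
      have h5 := (h3.comp_hasDerivAt x h4).deriv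
      simp only [hGdef]
      rw [← h5]
      rfl
    rw [hcongr, hi, inv_mul_cancel_left₀ Complex.two_pi_I_ne_zero]
    simp only [hW, Multiset.map_map, Function.comp_def]
  refine (diff_esymm hp k).congr_of_eventuallyEq ?_
  filter_upwards [card_ev ha hg] with e he
  have : (W e).card = k := by simp only [hW, Multiset.card_map, he, hk]
  rw [← this, Multiset.esymm, Multiset.powersetCard_self]
  simp [Rh, hW]

lemma Rh_prod {ι : Type*} (s : Finset ι) (f : ℂ × E → ℂ) (κ : ι → ℂ × E → ℂ) (a : ℝ) (e : E) :
    Rh f (fun p => ∏ i ∈ s, κ i p) a e = ∏ i ∈ s, Rh f (κ i) a e := by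
  simp only [Rh]
  induction s using Finset.induction_on with
  | empty => simp
  | insert i s hi ih => simp only [Finset.prod_insert hi, Multiset.prod_map_mul, ih]

lemma Rh_mul (f h κ : ℂ × E → ℂ) (a : ℝ) (e : E) :
    Rh f (fun p => h p * κ p) a e = Rh f h a e * Rh f κ a e := by
  simp [Rh, Multiset.prod_map_mul]

lemma Rh_pow (f h : ℂ × E → ℂ) (n : ℕ) (a : ℝ) (e : E) :
    Rh f (fun p => h p ^ n) a e = Rh f h a e ^ n := by
  simp [Rh, Multiset.prod_map_pow]

lemma Rh_eq_zero {f h : ℂ × E → ℂ} {a : ℝ} (ha : 0 < a) {e : E} (hg : Good f a e) :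
    Rh f h a e = 0 ↔ ∃ x ∈ ball (0 : ℂ) a, f (x, e) = 0 ∧ h (x, e) = 0 := by
  rw [Rh, Multiset.prod_eq_zero_iff, Multiset.mem_map]
  constructor
  · rintro ⟨x, hx, h0⟩
    rw [mem_zs ha hg.nv] at hx
    exact ⟨x, hx.1, hx.2, h0⟩
  · rintro ⟨x, hx, h1, h0⟩
    exact ⟨x, (mem_zs ha hg.nv).2 ⟨hx, h1⟩, h0⟩

end Families


/-! ### Counting solutions -/

section Count

lemma local_theta {F G : ℂ × ℂ → ℂ} {F' G' : ℂ × ℂ →L[ℂ] ℂ} {p₀ : ℂ × ℂ}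
    (hF : HasFDerivAt F F' p₀) (hG : HasFDerivAt G G' p₀) (hF0 : F p₀ = 0) (hG0 : G p₀ = 0)
    (hinj : ∀ v, F' v = 0 → G' v = 0 → v = 0) :
    G =Θ[𝓝 p₀ ⊓ 𝓟 {p | F p = 0}] fun p => p - p₀ := by
  constructor
  · have := hG.isBigO_sub
    simp only [hG0, sub_zero] at this
    exact this.mono inf_le_left
  · have hFG := hF.prodMk hG
    have hker : (F'.prod G').ker = ⊥ := by
      refine (LinearMap.ker_eq_bot').2 fun v hv => ?_
      have h1 := congrArg Prod.fst hv
      have h2 := congrArg Prod.snd hv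
      exact hinj v h1 h2
    obtain ⟨K, -, hK⟩ := LinearMap.exists_antilipschitzWith _ hker
    have := (hFG.isTheta_sub (hK.isUniformInducing (F'.prod G').uniformContinuous).isInducing).2.mono (inf_le_left (b := 𝓟 {p | F p = 0}))
    refine this.trans ?_
    refine IsBigO.of_bound 1 ?_
    rw [eventually_inf_principal]
    refine Eventually.of_forall fun p hp => ?_
    have hp' : F p = 0 := hp
    simp [hp', hF0, hG0, Prod.norm_def]

lemma local_kappa {F H : ℂ × ℂ → ℂ} {ξ y₀ : ℂ}
    (hF : AnalyticAt ℂ F (ξ, y₀)) (hH : AnalyticAt ℂ H (ξ, y₀))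
    (hF0 : F (ξ, y₀) = 0) (hH0 : H (ξ, y₀) = 0)
    (hinj : ∀ v, fderiv ℂ F (ξ, y₀) v = 0 → fderiv ℂ H (ξ, y₀) v = 0 → v = 0) :
    ∃ M : ℂ, (H =Θ[𝓝 (ξ, y₀) ⊓ 𝓟 {p | F p = 0}] fun p => p.1 - (ξ + M * (p.2 - y₀))) ∧
      (fun y => F (ξ + M * (y - y₀), y)) =Θ[𝓝 y₀] fun y => y - y₀ := by
  have hF' := hF.differentiableAt.hasFDerivAt
  have hH' := hH.differentiableAt.hasFDerivAt
  set L := fderiv ℂ F (ξ, y₀)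
  set N := fderiv ℂ H (ξ, y₀)
  have hlin : ∀ v : ℂ × ℂ, L v = v.1 * L (1, 0) + v.2 * L (0, 1) := by
    intro v
    have : v = v.1 • ((1, 0) : ℂ × ℂ) + v.2 • ((0, 1) : ℂ × ℂ) := by ext <;> simp
    conv_lhs => rw [this]
    rw [map_add, map_smul, map_smul, smul_eq_mul, smul_eq_mul]
  have hlinN : ∀ v : ℂ × ℂ, N v = v.1 * N (1, 0) + v.2 * N (0, 1) := by
    intro v
    have : v = v.1 • ((1, 0) : ℂ × ℂ) + v.2 • ((0, 1) : ℂ × ℂ) := by ext <;> simp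
    conv_lhs => rw [this]
    rw [map_add, map_smul, map_smul, smul_eq_mul, smul_eq_mul]
  obtain ⟨M, hM⟩ : ∃ M : ℂ, M * L (1, 0) + L (0, 1) ≠ 0 := by
    by_cases hβ : L (0, 1) = 0
    · refine ⟨1, fun h => ?_⟩
      have hα : L (1, 0) = 0 := by simpa [hβ] using h
      have hL : ∀ v, L v = 0 := fun v => by rw [hlin, hα, hβ]; ring
      by_cases hn : N (0, 1) = 0
      · have := hinj _ (hL (0, 1)) hn
        simp at this
      · have := hinj (- N (0, 1), N (1, 0)) (hL _) (by rw [hlinN]; ring)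
        simp [hn] at this
    · exact ⟨0, by simpa using hβ⟩
  refine ⟨M, ?_, ?_⟩
  · refine (local_theta hF' hH' hF0 hH0 hinj).trans ?_
    have hκ : HasFDerivAt (fun p : ℂ × ℂ => p.1 - (ξ + M * (p.2 - y₀)))
        (ContinuousLinearMap.fst ℂ ℂ ℂ - M • ContinuousLinearMap.snd ℂ ℂ ℂ) (ξ, y₀) := by
      refine HasFDerivAt.sub hasFDerivAt_fst ?_
      refine HasFDerivAt.const_add _ ?_
      exact (hasFDerivAt_snd.sub_const y₀).const_mul M
    refine (local_theta hF' hκ hF0 (by simp) fun v hv hv' => ?_).symm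
    have h1 : v.1 = M * v.2 := by simpa [sub_eq_zero] using hv'
    rw [hlin, h1] at hv
    have h2 : v.2 * (M * L (1, 0) + L (0, 1)) = 0 := by linear_combination hv
    have h3 : v.2 = 0 := (mul_eq_zero.1 h2).resolve_right hM
    ext
    · simp [h1, h3]
    · simp [h3]
  · have hc : HasDerivAt (fun y : ℂ => (ξ + M * (y - y₀), y)) ((M, 1) : ℂ × ℂ) y₀ := by
      refine HasDerivAt.prodMk ?_ (hasDerivAt_id y₀)
      simpa using (((hasDerivAt_id y₀).sub_const y₀).const_mul M).const_add ξ
    have hF'' : HasFDerivAt F L ((fun y : ℂ => (ξ + M * (y - y₀), y)) y₀) := by simpa using hF'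
    have h1 := HasFDerivAt.comp_hasDerivAt (f := fun y : ℂ => (ξ + M * (y - y₀), y)) y₀ hF'' hc
    have h2 : L (M, 1) ≠ 0 := by rw [hlin]; simpa using hM
    have h3 := h1.isTheta_sub h2
    have ht : Tendsto (fun y : ℂ => (y, y₀)) (𝓝 y₀) (𝓝 y₀ ×ˢ pure y₀) :=
      tendsto_id.prodMk tendsto_const_pure
    have h4 := h3.1.comp_tendsto ht
    have h5 := h3.2.comp_tendsto ht
    simp only [Function.comp_def, sub_self, mul_zero, add_zero, hF0, sub_zero] at h4 h5
    exact ⟨h4, h5⟩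

lemma fiber_theta {F H : ℂ × ℂ → ℂ} {a : ℝ} (ha : 0 < a) {y₀ : ℂ} (hg : Good F a y₀)
    (hH : ∀ x ∈ closedBall (0 : ℂ) a, AnalyticAt ℂ H (x, y₀))
    (hinj : ∀ x ∈ ball (0 : ℂ) a, F (x, y₀) = 0 → H (x, y₀) = 0 →
      ∀ v, fderiv ℂ F (x, y₀) v = 0 → fderiv ℂ H (x, y₀) v = 0 → v = 0)
    (S : Finset ℂ) (hS : ∀ x, x ∈ S ↔ x ∈ ball (0 : ℂ) a ∧ F (x, y₀) = 0 ∧ H (x, y₀) = 0) :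
    Rh F H a =Θ[𝓝 y₀] fun y => (y - y₀) ^ S.card := by
  have hM : ∀ ξ, ∃ M : ℂ, ξ ∈ S →
      (H =Θ[𝓝 (ξ, y₀) ⊓ 𝓟 {p | F p = 0}] fun p => p.1 - (ξ + M * (p.2 - y₀))) ∧
      (fun y => F (ξ + M * (y - y₀), y)) =Θ[𝓝 y₀] fun y => y - y₀ := by
    intro ξ
    by_cases hξ : ξ ∈ S
    · obtain ⟨h1, h2, h3⟩ := (hS ξ).1 hξ
      have hξ' := ball_subset_closedBall h1
      obtain ⟨M, hM⟩ := local_kappa (hg.1 ξ hξ') (hH ξ hξ') h2 h3 (hinj ξ h1 h2 h3)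
      exact ⟨M, fun _ => hM⟩
    · exact ⟨0, fun h => absurd h hξ⟩
  choose M hM using hM
  have hne : ∀ x ξ : ℂ, x ≠ ξ → (fun p : ℂ × ℂ => p.1 - (ξ + M ξ * (p.2 - y₀)))
      =Θ[𝓝 (x, y₀) ⊓ 𝓟 {p | F p = 0}] fun _ => (1 : ℂ) := by
    intro x ξ hx
    have hc : ContinuousAt (fun p : ℂ × ℂ => p.1 - (ξ + M ξ * (p.2 - y₀))) (x, y₀) := by fun_prop
    refine theta_one (c := x - ξ) ?_ (sub_ne_zero.2 hx)
    have := hc.tendsto.mono_left (inf_le_left (b := 𝓟 {p | F p = 0}))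
    simpa using this
  have hprod : ∀ (x : ℂ) (T : Finset ℂ), x ∉ T →
      (fun p : ℂ × ℂ => ∏ ξ ∈ T, (p.1 - (ξ + M ξ * (p.2 - y₀))))
      =Θ[𝓝 (x, y₀) ⊓ 𝓟 {p | F p = 0}] fun _ => (1 : ℂ) := by
    intro x T
    induction T using Finset.induction_on with
    | empty => intro _; simp only [Finset.prod_empty]; exact isTheta_rfl
    | insert ξ T hξ ih =>
      intro hx
      rw [Finset.mem_insert, not_or] at hx
      simp only [Finset.prod_insert hξ]
      simpa using (hne x ξ hx.1).mul (ih hx.2)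
  have h1 : Rh F H a =Θ[𝓝 y₀] Rh F (fun p => ∏ ξ ∈ S, (p.1 - (ξ + M ξ * (p.2 - y₀)))) a := by
    refine Rh_isTheta ha hg fun x hx h0 => ?_
    by_cases hxS : x ∈ S
    · have h2 : (fun p : ℂ × ℂ => ∏ ξ ∈ S, (p.1 - (ξ + M ξ * (p.2 - y₀)))) = fun p =>
          (p.1 - (x + M x * (p.2 - y₀))) * ∏ ξ ∈ S.erase x, (p.1 - (ξ + M ξ * (p.2 - y₀))) := by
        funext p
        rw [Finset.mul_prod_erase S (fun ξ => p.1 - (ξ + M ξ * (p.2 - y₀))) hxS]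
      rw [h2]
      simpa using (hM x hxS).1.mul (hprod x (S.erase x) (Finset.notMem_erase x S)).symm
    · refine IsTheta.trans ?_ (hprod x S hxS).symm
      have hHx : H (x, y₀) ≠ 0 := fun h => hxS ((hS x).2 ⟨hx, h0, h⟩)
      exact theta_one ((hH x (ball_subset_closedBall hx)).continuousAt.tendsto.mono_left
        inf_le_left) hHx
  refine h1.trans ?_
  have h2 : Rh F (fun p => ∏ ξ ∈ S, (p.1 - (ξ + M ξ * (p.2 - y₀)))) a =
      fun y => ∏ ξ ∈ S, Rh F (fun p => p.1 - (ξ + M ξ * (p.2 - y₀))) a y := by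
    funext y
    exact Rh_prod S F (fun ξ p => p.1 - (ξ + M ξ * (p.2 - y₀))) a y
  rw [h2]
  have h3 : ∀ T ⊆ S, (fun y => ∏ ξ ∈ T, Rh F (fun p => p.1 - (ξ + M ξ * (p.2 - y₀))) a y)
      =Θ[𝓝 y₀] fun y => (y - y₀) ^ T.card := by
    intro T
    induction T using Finset.induction_on with
    | empty => intro _; simp only [Finset.prod_empty, Finset.card_empty, pow_zero]; exact isTheta_rfl
    | insert ξ T hξ ih =>
      intro hT
      have hξS : ξ ∈ S := hT (Finset.mem_insert_self ξ T)
      simp only [Finset.prod_insert hξ, Finset.card_insert_of_notMem hξ, pow_succ']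
      refine IsTheta.mul ?_ (ih ((Finset.subset_insert ξ T).trans hT))
      refine IsTheta.trans ?_ (hM ξ hξS).2
      refine Rh_linear ha hg (ξ := fun y => ξ + M ξ * (y - y₀)) (by fun_prop) ?_
      simpa using ((hS ξ).1 hξS).1
  exact h3 S subset_rfl

lemma count_solutions {F H : ℂ × ℂ → ℂ} {a b : ℝ} (ha : 0 < a) (hb : 0 < b)
    (hg : ∀ y ∈ closedBall (0 : ℂ) b, Good F a y)
    (hH : ∀ y ∈ closedBall (0 : ℂ) b, ∀ x ∈ closedBall (0 : ℂ) a, AnalyticAt ℂ H (x, y))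
    (hnv : NV b (Rh F H a))
    (hinj : ∀ x ∈ ball (0 : ℂ) a, ∀ y ∈ ball (0 : ℂ) b, F (x, y) = 0 → H (x, y) = 0 →
      ∀ v, fderiv ℂ F (x, y) v = 0 → fderiv ℂ H (x, y) v = 0 → v = 0) :
    {p : ℂ × ℂ | p.1 ∈ ball (0 : ℂ) a ∧ p.2 ∈ ball (0 : ℂ) b ∧ F p = 0 ∧ H p = 0}.ncard =
      (zs b (Rh F H a)).card := by
  set S : ℂ → Finset ℂ := fun y => (zs a (fun x => F (x, y))).toFinset.filter
    (fun x => H (x, y) = 0) with hSdef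
  have hS : ∀ y ∈ ball (0 : ℂ) b, ∀ x, x ∈ S y ↔
      x ∈ ball (0 : ℂ) a ∧ F (x, y) = 0 ∧ H (x, y) = 0 := by
    intro y hy x
    simp only [hSdef, Finset.mem_filter, Multiset.mem_toFinset,
      mem_zs ha (hg y (ball_subset_closedBall hy)).nv, and_assoc]
  have hcount : ∀ y ∈ ball (0 : ℂ) b, (zs b (Rh F H a)).count y = (S y).card := by
    intro y hy
    have hy' := ball_subset_closedBall hy
    have hθ := fiber_theta ha (hg y hy') (hH y hy') (fun x hx => hinj x hx y hy) (S y) (hS y hy)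
    exact le_antisymm (count_le hb hnv hy hθ.2) (le_count hb hnv hy hθ.1)
  have hset : {p : ℂ × ℂ | p.1 ∈ ball (0 : ℂ) a ∧ p.2 ∈ ball (0 : ℂ) b ∧ F p = 0 ∧ H p = 0} =
      ↑(((zs b (Rh F H a)).toFinset.sigma S).map
        ⟨fun q : (Σ _ : ℂ, ℂ) => ((q.2, q.1) : ℂ × ℂ), by
          rintro ⟨y, x⟩ ⟨y', x'⟩ h
          simp only [Prod.mk.injEq] at h
          obtain ⟨rfl, rfl⟩ := h
          rfl⟩) := by
    ext ⟨x, y⟩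
    simp only [Set.mem_ofPred_eq, Finset.coe_map, Set.mem_image, Finset.mem_coe, Finset.mem_sigma,
      Function.Embedding.coeFn_mk, Multiset.mem_toFinset, mem_zs hb hnv]
    constructor
    · rintro ⟨h1, h2, h3, h4⟩
      refine ⟨⟨y, x⟩, ⟨⟨h2, ?_⟩, (hS y h2 x).2 ⟨h1, h3, h4⟩⟩, rfl⟩
      exact (Rh_eq_zero ha (hg y (ball_subset_closedBall h2))).2 ⟨x, h1, h3, h4⟩
    · rintro ⟨⟨y', x'⟩, ⟨⟨h1, -⟩, h2⟩, h3⟩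
      obtain ⟨rfl, rfl⟩ := Prod.mk.injEq _ _ _ _ ▸ h3
      obtain ⟨h4, h5, h6⟩ := (hS _ h1 _).1 h2
      exact ⟨h4, h1, h5, h6⟩
  rw [hset, Set.ncard_coe_finset, Finset.card_map, Finset.card_sigma,
    ← Multiset.toFinset_sum_count_eq]
  refine Finset.sum_congr rfl fun y hy => ?_
  rw [Multiset.mem_toFinset, mem_zs hb hnv] at hy
  exact (hcount y hy.1).symm

end Count


/-! ### Stability -/

section Stable

variable {S : Type*} [NormedAddCommGroup S] [NormedSpace ℂ S]

lemma good_slice {f : ℂ × (ℂ × S) → ℂ} {a : ℝ} {y : ℂ} {s : S} (h : Good f a (y, s)) :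
    Good (fun p : ℂ × ℂ => f (p.1, (p.2, s))) a y :=
  ⟨fun x hx => AnalyticAt.fun_comp (f := fun p : ℂ × ℂ => (p.1, (p.2, s))) (g := f) (x := (x, y))
    (h.1 x hx) (AnalyticAt.prod analyticAt_fst (AnalyticAt.prod analyticAt_snd analyticAt_const)), h.2⟩

lemma stable {f h : ℂ × (ℂ × S) → ℂ} {a : ℝ} (ha : 0 < a) (hg : Good f a (0, 0))
    (hh : ∀ x ∈ closedBall (0 : ℂ) a, AnalyticAt ℂ h (x, (0, 0)))
    (hR : ∀ᶠ y in 𝓝[≠] (0 : ℂ), Rh f h a (y, 0) ≠ 0) {c : ℝ} (hc : 0 < c) :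
    ∃ b > 0, b < c ∧ NV b (fun y => Rh f h a (y, 0)) ∧
      (∀ y ∈ closedBall (0 : ℂ) b, Rh f h a (y, 0) = 0 → y = 0) ∧
      ∀ᶠ s in 𝓝 (0 : S), (∀ y ∈ closedBall (0 : ℂ) b, Good f a (y, s) ∧
        ∀ x ∈ closedBall (0 : ℂ) a, AnalyticAt ℂ h (x, (y, s))) ∧
        NV b (fun y => Rh f h a (y, s)) ∧
        (zs b (fun y => Rh f h a (y, s))).card = (zs b (fun y => Rh f h a (y, 0))).card := by
  obtain ⟨ρ, hρ, hρg⟩ := Metric.eventually_nhds_iff_ball.1 (hg.ev.and (analytic_ev hh))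
  rw [eventually_nhdsWithin_iff] at hR
  obtain ⟨σ, hσ, hσR⟩ := Metric.eventually_nhds_iff_ball.1 hR
  obtain ⟨b, hb, hb'⟩ := exists_between (lt_min hc (lt_min hρ hσ))
  rw [lt_min_iff, lt_min_iff] at hb'
  have hmem : ∀ y ∈ ball (0 : ℂ) ρ, ∀ s ∈ ball (0 : S) ρ, ((y, s) : ℂ × S) ∈ ball (0, 0) ρ := by
    intro y hy s hs
    rw [← ball_prod_same]
    exact ⟨hy, hs⟩
  have hdiff : ∀ p ∈ ball ((0, 0) : ℂ × S) ρ, DifferentiableAt ℂ (Rh f h a) p :=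
    fun p hp => Rh_diff ha (hρg p hp).1 (hρg p hp).2
  have hsub : closedBall (0 : ℂ) b ⊆ ball 0 ρ := closedBall_subset_ball hb'.2.1
  have hsub' : closedBall (0 : ℂ) b ⊆ ball 0 σ := closedBall_subset_ball hb'.2.2
  have han : ∀ s ∈ ball (0 : S) ρ, AnalyticOnNhd ℂ (fun y => Rh f h a (y, s)) (closedBall 0 b) := by
    intro s hs
    have : DifferentiableOn ℂ (fun y => Rh f h a (y, s)) (ball 0 ρ) := fun y hy =>
      (DifferentiableAt.comp (f := fun y : ℂ => (y, s)) (g := Rh f h a) y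
        (hdiff _ (hmem y hy s hs)) (by fun_prop)).differentiableWithinAt
    exact (this.analyticOnNhd isOpen_ball).mono hsub
  have h0 : (0 : S) ∈ ball (0 : S) ρ := mem_ball_self hρ
  have hz : ∀ y ∈ closedBall (0 : ℂ) b, Rh f h a (y, 0) = 0 → y = 0 := by
    intro y hy hy0
    by_contra hne
    exact hσR y (hsub' hy) hne hy0
  have hnv : NV b (fun y => Rh f h a (y, 0)) := by
    refine ⟨han 0 h0, fun y hy h => ?_⟩
    have := hz y (sphere_subset_closedBall hy) h
    subst this
    simp at hy
    exact hb.ne hy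
  refine ⟨b, hb, hb'.1, hnv, hz, ?_⟩
  have hev : ∀ᶠ s in 𝓝 (0 : S), ∀ y ∈ sphere (0 : ℂ) b,
      ‖Rh f h a (y, s) - Rh f h a (y, 0)‖ < ‖Rh f h a (y, 0)‖ := by
    refine compact_ev (isCompact_sphere (0 : ℂ) b)
      (P := fun p => ‖Rh f h a p - Rh f h a (p.1, 0)‖ < ‖Rh f h a (p.1, 0)‖) fun y hy => ?_
    have c1 := (hdiff _ (hmem y (hsub (sphere_subset_closedBall hy)) 0 h0)).continuousAt
    have c2 : ContinuousAt (fun p : ℂ × S => Rh f h a (p.1, 0)) (y, 0) :=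
      ContinuousAt.comp (f := fun p : ℂ × S => (p.1, (0 : S))) (g := Rh f h a) c1 (by fun_prop)
    refine (ContinuousAt.tendsto (c1.sub c2).norm).eventually_lt (ContinuousAt.tendsto c2.norm) ?_
    simpa using hnv.2 y hy
  filter_upwards [hev, ball_mem_nhds (0 : S) hρ] with s h1 h2
  refine ⟨fun y hy => hρg _ (hmem y (hsub hy) s h2), rouche hb hnv (han s h2) h1⟩

end Stable

/-! ### The order of the resultant -/

section Order

lemma Rh_snd (F : ℂ × ℂ → ℂ) (a : ℝ) (y : ℂ) :
    Rh F (fun p => p.2) a y = y ^ (zs a (fun x => F (x, y))).card := by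
  simp [Rh]

/-- On the zero set `y ^ d` is controlled by `x ^ (m + 1)`. -/
lemma yd_isBigO {A B : ℂ × ℂ → ℂ} {d m : ℕ} (hA : ContinuousAt A 0) (hB : ContinuousAt B 0)
    (hB0 : B 0 ≠ 0) :
    (fun p : ℂ × ℂ => p.2 ^ d) =O[𝓝 (0 : ℂ × ℂ) ⊓ 𝓟 {p | p.1 ^ (m + 1) * A p + p.2 ^ d * B p = 0}]
      fun p => p.1 ^ (m + 1) := by
  set l := 𝓝 (0 : ℂ × ℂ) ⊓ 𝓟 {p | p.1 ^ (m + 1) * A p + p.2 ^ d * B p = 0}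
  have hBθ : B =Θ[l] fun _ => (1 : ℂ) := theta_one (hB.tendsto.mono_left inf_le_left) hB0
  have hAO : A =O[l] fun _ => (1 : ℂ) := (hA.tendsto.isBigO_one ℂ).mono inf_le_left
  have h1 : (fun p : ℂ × ℂ => p.2 ^ d) =O[l] fun p => p.2 ^ d * B p := by
    simpa using (isBigO_refl (fun p : ℂ × ℂ => p.2 ^ d) l).mul hBθ.2
  refine h1.trans ?_
  have h2 : (fun p : ℂ × ℂ => p.2 ^ d * B p) =ᶠ[l] fun p => -(p.1 ^ (m + 1) * A p) := by
    rw [EventuallyEq, eventually_inf_principal]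
    refine Eventually.of_forall fun p hp => ?_
    have hp' : p.1 ^ (m + 1) * A p + p.2 ^ d * B p = 0 := hp
    linear_combination hp'
  refine h2.trans_isBigO ?_
  refine IsBigO.neg_left ?_
  simpa using (isBigO_refl (fun p : ℂ × ℂ => p.1 ^ (m + 1)) l).mul hAO

lemma pow_isBigO_pow {k n : ℕ} (h : n ≤ k) : (fun y : ℂ => y ^ k) =O[𝓝 0] fun y => y ^ n := by
  refine IsBigO.of_bound 1 ?_
  filter_upwards [ball_mem_nhds (0 : ℂ) one_pos] with y hy
  rw [mem_ball_zero_iff] at hy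
  rw [norm_pow, norm_pow, one_mul]
  exact pow_le_pow_of_le_one (norm_nonneg _) hy.le h

variable {A B C D : ℂ × ℂ → ℂ} {d m : ℕ} {a : ℝ}

lemma kappa_theta (ha : 0 < a)
    (hg : Good (fun p : ℂ × ℂ => p.1 ^ (m + 1) * A p + p.2 ^ d * B p) a 0)
    (hB : ContinuousAt B 0) (hB0 : B 0 ≠ 0) :
    Rh (fun p : ℂ × ℂ => p.1 ^ (m + 1) * A p + p.2 ^ d * B p) (fun p => p.2 * p.1 ^ m) a
      =Θ[𝓝 0] fun y => y ^ ((zs a (fun x =>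
        (fun p : ℂ × ℂ => p.1 ^ (m + 1) * A p + p.2 ^ d * B p) (x, 0))).card + d * m) := by
  set F := fun p : ℂ × ℂ => p.1 ^ (m + 1) * A p + p.2 ^ d * B p with hF
  have h1 : Rh F (fun p => p.2 * p.1 ^ m) a = fun y => Rh F (fun p => p.2) a y *
      Rh F (fun p => p.1) a y ^ m := by
    funext y
    rw [Rh_mul F (fun p => p.2) (fun p => p.1 ^ m), Rh_pow F (fun p => p.1)]
  rw [h1]
  have h2 := Rh_linear ha hg (ξ := fun _ => 0) continuousAt_const (mem_ball_self ha)
  simp only [sub_zero] at h2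
  have h3 : (fun y : ℂ => F (0, y)) =Θ[𝓝 0] fun y => y ^ d := by
    have hBc : Tendsto (fun y : ℂ => B (0, y)) (𝓝 0) (𝓝 (B 0)) := by
      have : ContinuousAt (fun y : ℂ => B (0, y)) 0 :=
        ContinuousAt.comp (f := fun y : ℂ => ((0 : ℂ), y)) (g := B) hB (by fun_prop)
      exact this.tendsto
    have h4 := (isTheta_refl (fun y : ℂ => y ^ d) (𝓝 0)).mul (theta_one hBc hB0)
    simpa [hF] using h4
  simp only [pow_add, pow_mul]
  refine IsTheta.mul ?_ ((h2.trans h3).pow m)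
  have h5 : Rh F (fun p => p.2) a =ᶠ[𝓝 0] fun y => y ^ (zs a (fun x => F (x, 0))).card := by
    filter_upwards [card_ev ha hg] with y hy
    rw [Rh_snd, hy]
  exact h5.isTheta

lemma order_lower (ha : 0 < a) (hd : 0 < d)
    (hg : Good (fun p : ℂ × ℂ => p.1 ^ (m + 1) * A p + p.2 ^ d * B p) a 0)
    (hA : ∀ x ∈ closedBall (0 : ℂ) a, ContinuousAt A (x, 0))
    (hB : ContinuousAt B 0) (hB0 : B 0 ≠ 0)
    (hC : ∀ x ∈ closedBall (0 : ℂ) a, ContinuousAt C (x, 0))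
    (hD : ∀ x ∈ closedBall (0 : ℂ) a, ContinuousAt D (x, 0)) :
    Rh (fun p : ℂ × ℂ => p.1 ^ (m + 1) * A p + p.2 ^ d * B p)
      (fun p => p.1 ^ m * p.2 * C p + p.2 ^ (d + 1) * D p) a =O[𝓝 0]
      fun y => (y - 0) ^ (d * m + m + 1) := by
  have h0a : (0 : ℂ) ∈ closedBall (0 : ℂ) a := mem_closedBall_self ha.le
  set F := fun p : ℂ × ℂ => p.1 ^ (m + 1) * A p + p.2 ^ d * B p with hF
  have h1 : Rh F (fun p => p.1 ^ m * p.2 * C p + p.2 ^ (d + 1) * D p) a =O[𝓝 0]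
      Rh F (fun p => p.2 * p.1 ^ m) a := by
    refine Rh_isBigO ha hg fun x hx h0 => ?_
    have hx' := ball_subset_closedBall hx
    have e1 : (fun p : ℂ × ℂ => p.1 ^ m * p.2 * C p + p.2 ^ (d + 1) * D p) =
        fun p => p.2 * (p.1 ^ m * C p + p.2 ^ d * D p) := by
      funext p; ring
    rw [e1]
    refine (isBigO_refl _ _).mul ?_
    by_cases hx0 : x = 0
    · subst hx0
      have hCO := ((hC 0 h0a).tendsto.isBigO_one ℂ).mono (inf_le_left (b := 𝓟 {p | F p = 0}))
      have hDO := ((hD 0 h0a).tendsto.isBigO_one ℂ).mono (inf_le_left (b := 𝓟 {p | F p = 0}))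
      have hx1 : (fun p : ℂ × ℂ => p.1) =O[𝓝 ((0 : ℂ), (0 : ℂ)) ⊓ 𝓟 {p | F p = 0}]
          fun _ => (1 : ℂ) := by
        have : ContinuousAt (fun p : ℂ × ℂ => p.1) (0, 0) := by fun_prop
        exact (this.tendsto.isBigO_one ℂ).mono inf_le_left
      have hy : (fun p : ℂ × ℂ => p.2 ^ d) =O[𝓝 ((0 : ℂ), (0 : ℂ)) ⊓ 𝓟 {p | F p = 0}]
          fun p => p.1 ^ (m + 1) := yd_isBigO (d := d) (m := m) (hA 0 h0a) hB hB0
      have hy2 : (fun p : ℂ × ℂ => p.1 ^ (m + 1)) =O[𝓝 ((0 : ℂ), (0 : ℂ)) ⊓ 𝓟 {p | F p = 0}]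
          fun p => p.1 ^ m := by
        simpa [pow_succ] using (isBigO_refl (fun p : ℂ × ℂ => p.1 ^ m) _).mul hx1
      refine IsBigO.add ?_ ?_
      · simpa using (isBigO_refl (fun p : ℂ × ℂ => p.1 ^ m) _).mul hCO
      · simpa using (hy.trans hy2).mul hDO
    · have hθ : (fun p : ℂ × ℂ => p.1 ^ m) =Θ[𝓝 (x, (0 : ℂ)) ⊓ 𝓟 {p | F p = 0}]
          fun _ => (1 : ℂ) := by
        have : ContinuousAt (fun p : ℂ × ℂ => p.1 ^ m) (x, 0) := by fun_prop
        exact theta_one (this.tendsto.mono_left inf_le_left) (pow_ne_zero _ hx0)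
      refine IsBigO.trans ?_ hθ.2
      have c1 := hC x hx'
      have c2 := hD x hx'
      have : ContinuousAt (fun p : ℂ × ℂ => p.1 ^ m * C p + p.2 ^ d * D p) (x, 0) := by fun_prop
      exact (this.tendsto.isBigO_one ℂ).mono inf_le_left
  refine (h1.trans (kappa_theta ha hg hB hB0).1).trans ?_
  simp only [sub_zero]
  refine pow_isBigO_pow ?_
  have hk : m + 1 ≤ (zs a (fun x => F (x, 0))).count 0 := by
    refine le_count ha hg.nv (mem_ball_self ha) ?_
    have hAc : ContinuousAt (fun x : ℂ => A (x, 0)) 0 :=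
      ContinuousAt.comp (f := fun x : ℂ => (x, (0 : ℂ))) (g := A) (hA 0 h0a) (by fun_prop)
    have := (isBigO_refl (fun x : ℂ => x ^ (m + 1)) (𝓝 0)).mul (hAc.tendsto.isBigO_one ℂ)
    simpa [hF, hd.ne'] using this
  have := hk.trans (Multiset.count_le_card 0 _)
  have h2 : (m + 1) + d * m ≤ (zs a (fun x => F (x, 0))).card + d * m := by omega
  linarith

lemma order_upper (ha : 0 < a) (hd : 0 < d)
    (hg : Good (fun p : ℂ × ℂ => p.1 ^ (m + 1) * A p + p.2 ^ d * B p) a 0)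
    (hA : ContinuousAt A 0) (hB : ContinuousAt B 0) (hC : ContinuousAt C 0) (hD : ContinuousAt D 0)
    (hA0 : A 0 ≠ 0) (hB0 : B 0 ≠ 0) (hC0 : C 0 ≠ 0)
    (hroot : ∀ x ∈ ball (0 : ℂ) a, x ^ (m + 1) * A (x, 0) + 0 ^ d * B (x, 0) = 0 → x = 0) :
    (fun y => (y - 0) ^ (d * m + m + 1)) =O[𝓝 0]
      Rh (fun p : ℂ × ℂ => p.1 ^ (m + 1) * A p + p.2 ^ d * B p)
      (fun p => p.1 ^ m * p.2 * C p + p.2 ^ (d + 1) * D p) a := by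
  set F := fun p : ℂ × ℂ => p.1 ^ (m + 1) * A p + p.2 ^ d * B p with hF
  have h1 : Rh F (fun p => p.2 * p.1 ^ m) a =O[𝓝 0]
      Rh F (fun p => p.1 ^ m * p.2 * C p + p.2 ^ (d + 1) * D p) a := by
    refine Rh_isBigO ha hg fun x hx h0 => ?_
    have hx0 := hroot x hx h0
    subst hx0
    have e1 : (fun p : ℂ × ℂ => p.1 ^ m * p.2 * C p + p.2 ^ (d + 1) * D p) =
        fun p => p.2 * (p.1 ^ m * C p + p.2 ^ d * D p) := by
      funext p; ring
    rw [e1]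
    refine (isBigO_refl _ _).mul ?_
    have hCθ : C =Θ[𝓝 ((0 : ℂ), (0 : ℂ)) ⊓ 𝓟 {p | F p = 0}] fun _ => (1 : ℂ) :=
      theta_one (hC.tendsto.mono_left inf_le_left) hC0
    have hDO := (hD.tendsto.isBigO_one ℂ).mono (inf_le_left (b := 𝓟 {p | F p = 0}))
    have hy : (fun p : ℂ × ℂ => p.2 ^ d) =O[𝓝 ((0 : ℂ), (0 : ℂ)) ⊓ 𝓟 {p | F p = 0}]
          fun p => p.1 ^ (m + 1) := yd_isBigO (d := d) (m := m) hA hB hB0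
    have hx1 : (fun p : ℂ × ℂ => p.1) =o[𝓝 ((0 : ℂ), (0 : ℂ)) ⊓ 𝓟 {p | F p = 0}]
        fun _ => (1 : ℂ) := by
      rw [isLittleO_one_iff]
      have : ContinuousAt (fun p : ℂ × ℂ => p.1) (0, 0) := by fun_prop
      exact this.tendsto.mono_left inf_le_left
    have hy2 : (fun p : ℂ × ℂ => p.1 ^ (m + 1)) =o[𝓝 ((0 : ℂ), (0 : ℂ)) ⊓ 𝓟 {p | F p = 0}]
        fun p => p.1 ^ m := by
      simpa [pow_succ] using (isBigO_refl (fun p : ℂ × ℂ => p.1 ^ m) _).mul_isLittleO hx1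
    have h3 : (fun p : ℂ × ℂ => p.1 ^ m * C p) =Θ[𝓝 ((0 : ℂ), (0 : ℂ)) ⊓ 𝓟 {p | F p = 0}]
        fun p => p.1 ^ m := by
      simpa using (isTheta_refl (fun p : ℂ × ℂ => p.1 ^ m) _).mul hCθ
    have h4 : (fun p : ℂ × ℂ => p.2 ^ d * D p) =o[𝓝 ((0 : ℂ), (0 : ℂ)) ⊓ 𝓟 {p | F p = 0}]
        fun p => p.1 ^ m * C p := by
      have : (fun p : ℂ × ℂ => p.2 ^ d * D p) =o[𝓝 ((0 : ℂ), (0 : ℂ)) ⊓ 𝓟 {p | F p = 0}]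
        fun p => p.1 ^ m := by simpa using (hy.trans_isLittleO hy2).mul_isBigO hDO
      exact this.trans_isTheta h3.symm
    refine h3.2.trans ?_
    exact h4.right_isBigO_add'
  refine IsBigO.trans ?_ h1
  refine IsBigO.trans ?_ (kappa_theta ha hg hB hB0).2
  simp only [sub_zero]
  refine pow_isBigO_pow ?_
  have hk : (zs a (fun x => F (x, 0))).count 0 ≤ m + 1 := by
    refine count_le ha hg.nv (mem_ball_self ha) ?_
    have hAc : ContinuousAt (fun x : ℂ => A (x, 0)) 0 :=
      ContinuousAt.comp (f := fun x : ℂ => (x, (0 : ℂ))) (g := A) hA (by fun_prop)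
    have := (isTheta_refl (fun x : ℂ => x ^ (m + 1)) (𝓝 0)).mul (theta_one hAc.tendsto hA0)
    simpa [hF, hd.ne'] using this.2
  have hc : (zs a (fun x => F (x, 0))).count 0 = (zs a (fun x => F (x, 0))).card := by
    rw [Multiset.count_eq_card]
    intro x hx
    rw [mem_zs ha hg.nv] at hx
    exact (hroot x hx.1 hx.2).symm
  rw [hc] at hk
  linarith

end Order


/-! ### The local statement on a polydisc -/

section Core

variable {A B C D : ℂ × ℂ → ℂ} {d m : ℕ} {a : ℝ}

/-- The first component with parameters. -/
def famF (A B : ℂ × ℂ → ℂ) (d m : ℕ) (P : ℂ × (ℂ × (ℂ × ℂ × ℂ))) : ℂ :=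
  P.1 ^ (m + 1) * (A (P.1, P.2.1) + P.2.2.2.2) + P.2.1 ^ d * (B (P.1, P.2.1) + P.2.2.2.2) - P.2.2.1

/-- The second component with parameters. -/
def famH (C D : ℂ × ℂ → ℂ) (d m : ℕ) (P : ℂ × (ℂ × (ℂ × ℂ × ℂ))) : ℂ :=
  P.1 ^ m * P.2.1 * C (P.1, P.2.1) + P.2.1 ^ (d + 1) * D (P.1, P.2.1) - P.2.2.2.1

lemma an_proj {Q : ℂ × (ℂ × (ℂ × ℂ × ℂ))} :
    AnalyticAt ℂ (fun P : ℂ × (ℂ × (ℂ × ℂ × ℂ)) => P.1) Q ∧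
    AnalyticAt ℂ (fun P : ℂ × (ℂ × (ℂ × ℂ × ℂ)) => P.2.1) Q ∧
    AnalyticAt ℂ (fun P : ℂ × (ℂ × (ℂ × ℂ × ℂ)) => P.2.2.1) Q ∧
    AnalyticAt ℂ (fun P : ℂ × (ℂ × (ℂ × ℂ × ℂ)) => P.2.2.2.1) Q ∧
    AnalyticAt ℂ (fun P : ℂ × (ℂ × (ℂ × ℂ × ℂ)) => P.2.2.2.2) Q := by
  have h2 : AnalyticAt ℂ (fun P : ℂ × (ℂ × (ℂ × ℂ × ℂ)) => P.2) Q := analyticAt_snd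
  have h22 : AnalyticAt ℂ (fun P : ℂ × (ℂ × (ℂ × ℂ × ℂ)) => P.2.2) Q :=
    AnalyticAt.fun_comp analyticAt_snd h2
  have h222 : AnalyticAt ℂ (fun P : ℂ × (ℂ × (ℂ × ℂ × ℂ)) => P.2.2.2) Q :=
    AnalyticAt.fun_comp analyticAt_snd h22
  exact ⟨analyticAt_fst, AnalyticAt.fun_comp analyticAt_fst h2,
    AnalyticAt.fun_comp analyticAt_fst h22, AnalyticAt.fun_comp analyticAt_fst h222,
    AnalyticAt.fun_comp analyticAt_snd h222⟩

lemma famF_an {x y : ℂ} {s : ℂ × ℂ × ℂ} (hA : AnalyticAt ℂ A (x, y)) (hB : AnalyticAt ℂ B (x, y)) :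
    AnalyticAt ℂ (famF A B d m) (x, (y, s)) := by
  obtain ⟨h1, h2, h3, h4, h5⟩ := an_proj (Q := (x, (y, s)))
  have hA' : AnalyticAt ℂ (fun P : ℂ × (ℂ × (ℂ × ℂ × ℂ)) => A (P.1, P.2.1)) (x, (y, s)) :=
    AnalyticAt.fun_comp (g := A) (f := fun P : ℂ × (ℂ × (ℂ × ℂ × ℂ)) => (P.1, P.2.1)) hA (h1.prod h2)
  have hB' : AnalyticAt ℂ (fun P : ℂ × (ℂ × (ℂ × ℂ × ℂ)) => B (P.1, P.2.1)) (x, (y, s)) :=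
    AnalyticAt.fun_comp (g := B) (f := fun P : ℂ × (ℂ × (ℂ × ℂ × ℂ)) => (P.1, P.2.1)) hB (h1.prod h2)
  exact (((h1.pow (m + 1)).mul (hA'.add h5)).add ((h2.pow d).mul (hB'.add h5))).sub h3

lemma famH_an {x y : ℂ} {s : ℂ × ℂ × ℂ} (hC : AnalyticAt ℂ C (x, y)) (hD : AnalyticAt ℂ D (x, y)) :
    AnalyticAt ℂ (famH C D d m) (x, (y, s)) := by
  obtain ⟨h1, h2, h3, h4, h5⟩ := an_proj (Q := (x, (y, s)))
  have hA' : AnalyticAt ℂ (fun P : ℂ × (ℂ × (ℂ × ℂ × ℂ)) => C (P.1, P.2.1)) (x, (y, s)) :=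
    AnalyticAt.fun_comp (g := C) (f := fun P : ℂ × (ℂ × (ℂ × ℂ × ℂ)) => (P.1, P.2.1)) hC (h1.prod h2)
  have hB' : AnalyticAt ℂ (fun P : ℂ × (ℂ × (ℂ × ℂ × ℂ)) => D (P.1, P.2.1)) (x, (y, s)) :=
    AnalyticAt.fun_comp (g := D) (f := fun P : ℂ × (ℂ × (ℂ × ℂ × ℂ)) => (P.1, P.2.1)) hD (h1.prod h2)
  exact ((((h1.pow m).mul h2).mul hA').add ((h2.pow (d + 1)).mul hB')).sub h4

lemma famF_t (t : ℂ) : (fun p : ℂ × ℂ => famF A B d m (p.1, (p.2, ((0 : ℂ), (0 : ℂ), t)))) =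
    fun p => p.1 ^ (m + 1) * (fun p => A p + t) p + p.2 ^ d * (fun p => B p + t) p := by
  funext p; simp [famF]

lemma famH_t (t : ℂ) : (fun p : ℂ × ℂ => famH C D d m (p.1, (p.2, ((0 : ℂ), (0 : ℂ), t)))) =
    fun p => p.1 ^ m * p.2 * C p + p.2 ^ (d + 1) * D p := by
  funext p; simp [famH]

lemma famF_q (q₁ q₂ : ℂ) : (fun p : ℂ × ℂ => famF A B d m (p.1, (p.2, (q₁, q₂, (0 : ℂ))))) =
    fun p => (p.1 ^ (m + 1) * A p + p.2 ^ d * B p) - q₁ := by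
  funext p; simp [famF]

lemma famH_q (q₁ q₂ : ℂ) : (fun p : ℂ × ℂ => famH C D d m (p.1, (p.2, (q₁, q₂, (0 : ℂ))))) =
    fun p => (p.1 ^ m * p.2 * C p + p.2 ^ (d + 1) * D p) - q₂ := by
  funext p; simp [famH]

lemma core (ha : 0 < a) (hd : 0 < d)
    (hA : AnalyticOnNhd ℂ A (closedBall 0 a)) (hB : AnalyticOnNhd ℂ B (closedBall 0 a))
    (hC : AnalyticOnNhd ℂ C (closedBall 0 a)) (hD : AnalyticOnNhd ℂ D (closedBall 0 a))
    (hiso : ∀ p ∈ closedBall (0 : ℂ × ℂ) a, p.1 ^ (m + 1) * A p + p.2 ^ d * B p = 0 →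
      p.1 ^ m * p.2 * C p + p.2 ^ (d + 1) * D p = 0 → p = 0) :
    ∃ μ, d * m + m + 1 ≤ μ ∧ (A 0 ≠ 0 → B 0 ≠ 0 → C 0 ≠ 0 → μ = d * m + m + 1) ∧
      ∃ b > 0, b < a ∧ ∃ δ > 0, ∀ q₁ q₂ : ℂ, ‖q₁‖ < δ → ‖q₂‖ < δ →
        (∀ p : ℂ × ℂ, p.1 ∈ ball (0 : ℂ) a → p.2 ∈ ball (0 : ℂ) b →
          p.1 ^ (m + 1) * A p + p.2 ^ d * B p = q₁ →
          p.1 ^ m * p.2 * C p + p.2 ^ (d + 1) * D p = q₂ →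
          ∀ v, fderiv ℂ (fun p : ℂ × ℂ => p.1 ^ (m + 1) * A p + p.2 ^ d * B p) p v = 0 →
            fderiv ℂ (fun p : ℂ × ℂ => p.1 ^ m * p.2 * C p + p.2 ^ (d + 1) * D p) p v = 0 →
            v = 0) →
        {p : ℂ × ℂ | p.1 ∈ ball (0 : ℂ) a ∧ p.2 ∈ ball (0 : ℂ) b ∧
          p.1 ^ (m + 1) * A p + p.2 ^ d * B p = q₁ ∧
          p.1 ^ m * p.2 * C p + p.2 ^ (d + 1) * D p = q₂}.ncard = μ := by
  have hmem : ∀ x ∈ closedBall (0 : ℂ) a, ∀ y ∈ closedBall (0 : ℂ) a,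
      ((x, y) : ℂ × ℂ) ∈ closedBall (0 : ℂ × ℂ) a := by
    intro x hx y hy
    have : closedBall (0 : ℂ × ℂ) a = closedBall (0 : ℂ) a ×ˢ closedBall (0 : ℂ) a :=
      (closedBall_prod_same (0 : ℂ) (0 : ℂ) a).symm
    rw [this]
    exact ⟨hx, hy⟩
  have h0a : (0 : ℂ) ∈ closedBall (0 : ℂ) a := mem_closedBall_self ha.le
  have hroot : ∀ x ∈ closedBall (0 : ℂ) a,
      x ^ (m + 1) * A (x, 0) + 0 ^ d * B (x, 0) = 0 → x = 0 := by
    intro x hx h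
    have := hiso (x, 0) (hmem x hx 0 h0a) h (by simp)
    exact congrArg Prod.fst this
  have hgood : Good (famF A B d m) a (0, 0) := by
    refine ⟨fun x hx => famF_an (hA _ (hmem x hx 0 h0a)) (hB _ (hmem x hx 0 h0a)), fun x hx h => ?_⟩
    have := hroot x (sphere_subset_closedBall hx) (by simpa [famF] using h)
    subst this
    simp at hx
    exact ha.ne hx
  have hh : ∀ x ∈ closedBall (0 : ℂ) a, AnalyticAt ℂ (famH C D d m) (x, (0, 0)) :=
    fun x hx => famH_an (hC _ (hmem x hx 0 h0a)) (hD _ (hmem x hx 0 h0a))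
  have hR : ∀ᶠ y in 𝓝[≠] (0 : ℂ), Rh (famF A B d m) (famH C D d m) a (y, 0) ≠ 0 := by
    rw [eventually_nhdsWithin_iff]
    have hc : ContinuousAt (fun y : ℂ => (y, (0 : ℂ × ℂ × ℂ))) 0 := by fun_prop
    filter_upwards [hc.eventually hgood.ev, closedBall_mem_nhds (0 : ℂ) ha] with y h1 h2 h3 h4
    rw [Rh_eq_zero ha h1] at h4
    obtain ⟨x, hx, h5, h6⟩ := h4
    have := hiso (x, y) (hmem x (ball_subset_closedBall hx) y h2) (by simpa [famF] using h5)
      (by simpa [famH] using h6)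
    exact h3 (congrArg Prod.snd this)
  obtain ⟨b, hb, hba, hnv, hz, hev⟩ := stable ha hgood hh hR ha
  set μ := (zs b (fun y => Rh (famF A B d m) (famH C D d m) a (y, 0))).card with hμ
  refine ⟨μ, ?_, ?_, b, hb, hba, ?_⟩
  · -- lower bound by perturbation
    have ht : ∀ c : ℂ, ∀ᶠ t in 𝓝[≠] (0 : ℂ), c + t ≠ 0 := by
      intro c
      rw [eventually_nhdsWithin_iff]
      by_cases hc : c = 0
      · subst hc
        exact Eventually.of_forall fun t ht => by simpa using ht
      · have : ContinuousAt (fun t : ℂ => c + t) 0 := by fun_prop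
        filter_upwards [this.eventually_ne (y := 0) (by simpa using hc)] with t h1 _ using h1
    have hcont : Tendsto (fun t : ℂ => ((0 : ℂ), (0 : ℂ), t)) (𝓝[≠] 0) (𝓝 0) := by
      have : Continuous (fun t : ℂ => ((0 : ℂ), (0 : ℂ), t)) := by fun_prop
      exact (this.tendsto 0).mono_left nhdsWithin_le_nhds
    obtain ⟨t, htB, h1, h2, h3⟩ := ((ht (B 0)).and (hcont.eventually hev)).exists
    have hgt := good_slice (h1 0 (mem_closedBall_self hb.le)).1
    rw [famF_t] at hgt
    have hlow := order_lower (C := C) (D := D) ha hd hgt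
      (fun x hx => ((hA _ (hmem x hx 0 h0a)).continuousAt.add continuousAt_const))
      ((hB 0 (mem_closedBall_self ha.le)).continuousAt.add continuousAt_const) htB
      (fun x hx => (hC _ (hmem x hx 0 h0a)).continuousAt)
      (fun x hx => (hD _ (hmem x hx 0 h0a)).continuousAt)
    rw [← famF_t, ← famH_t t] at hlow
    have := le_count hb h2 (mem_ball_self hb) (y₀ := 0) hlow
    rw [← h3]
    exact this.trans (Multiset.count_le_card _ _)
  · intro hA0 hB0 hC0
    have h00 : (0 : ℂ × ℂ) ∈ closedBall (0 : ℂ × ℂ) a := mem_closedBall_self ha.le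
    have e1 : (fun p : ℂ × ℂ => famF A B d m (p.1, (p.2, (0 : ℂ × ℂ × ℂ)))) =
        fun p => p.1 ^ (m + 1) * A p + p.2 ^ d * B p := by
      funext p; simp [famF]
    have e2 : (fun p : ℂ × ℂ => famH C D d m (p.1, (p.2, (0 : ℂ × ℂ × ℂ)))) =
        fun p => p.1 ^ m * p.2 * C p + p.2 ^ (d + 1) * D p := by
      funext p; simp [famH]
    have hg0 := good_slice hgood
    rw [e1] at hg0
    have hup := order_upper ha hd hg0 (hA 0 h00).continuousAt (hB 0 h00).continuousAt
      (hC 0 h00).continuousAt (hD 0 h00).continuousAt hA0 hB0 hC0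
      (fun x hx => hroot x (ball_subset_closedBall hx))
    have hlow := order_lower (C := C) (D := D) ha hd hg0
      (fun x hx => (hA _ (hmem x hx 0 h0a)).continuousAt) (hB 0 h00).continuousAt hB0
      (fun x hx => (hC _ (hmem x hx 0 h0a)).continuousAt)
      (fun x hx => (hD _ (hmem x hx 0 h0a)).continuousAt)
    rw [← e1, ← e2] at hup hlow
    have h1 := count_le hb hnv (mem_ball_self hb) (y₀ := 0) hup
    have h2 := le_count hb hnv (mem_ball_self hb) (y₀ := 0) hlow
    have hc : (zs b (fun y => Rh (famF A B d m) (famH C D d m) a (y, 0))).count 0 = μ := by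
      refine Multiset.count_eq_card.2 fun y hy => ?_
      rw [mem_zs hb hnv] at hy
      exact (hz y (ball_subset_closedBall hy.1) hy.2).symm
    rw [hc] at h1 h2
    exact le_antisymm h1 h2
  · obtain ⟨δ, hδ, hball⟩ := Metric.eventually_nhds_iff_ball.1 hev
    refine ⟨δ, hδ, fun q₁ q₂ hq₁ hq₂ hreg => ?_⟩
    have hs : ((q₁, q₂, (0 : ℂ)) : ℂ × ℂ × ℂ) ∈ ball (0 : ℂ × ℂ × ℂ) δ := by
      rw [mem_ball_zero_iff, Prod.norm_def, Prod.norm_def]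
      simp [hq₁, hq₂, hδ]
    obtain ⟨h1, h2, h3⟩ := hball _ hs
    have hcount := count_solutions (F := fun p => famF A B d m (p.1, (p.2, (q₁, q₂, (0 : ℂ)))))
      (H := fun p => famH C D d m (p.1, (p.2, (q₁, q₂, (0 : ℂ))))) ha hb
      (fun y hy => good_slice (h1 y hy).1)
      (fun y hy x hx => AnalyticAt.fun_comp (g := famH C D d m) (x := (x, y))
        (f := fun p : ℂ × ℂ => (p.1, (p.2, (q₁, q₂, (0 : ℂ))))) ((h1 y hy).2 x hx)
        (AnalyticAt.prod analyticAt_fst (AnalyticAt.prod analyticAt_snd analyticAt_const))) h2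
      (by
        rw [famF_q, famH_q]
        intro x hx y hy hF hH v hv hv'
        rw [fderiv_sub_const] at hv hv'
        exact hreg (x, y) hx hy (sub_eq_zero.1 ((congrFun (famF_q q₁ q₂) (x, y)).symm.trans hF))
          (sub_eq_zero.1 ((congrFun (famH_q q₁ q₂) (x, y)).symm.trans hH)) v hv hv')
    rw [← h3]
    refine Eq.trans ?_ hcount
    simp only [famF, famH, add_zero, sub_eq_zero]

end Core


/-! ### Transfer to `Cn 2` -/

section Transfer

lemma exists_regular {g : Cn 2 → Cn 2} {s : Set (Cn 2)} (hg : ∀ x ∈ s, DifferentiableAt ℂ g x)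
    {ε : ℝ} (hε : 0 < ε) : ∃ q : Cn 2, ‖q‖ < ε ∧ IsRegularValueOn g s q := by
  set K : Set (Cn 2) := {x ∈ s | ¬ Function.Bijective (fderiv ℂ g x)} with hK
  have hz : MeasureTheory.volume (g '' K) = 0 := by
    refine MeasureTheory.addHaar_image_eq_zero_of_det_fderivWithin_eq_zero MeasureTheory.volume
      (f' := fun x => (fderiv ℂ g x).restrictScalars ℝ) (fun x hx => ?_) (fun x hx => ?_)
    · exact ((hg x hx.1).hasFDerivAt.restrictScalars ℝ).hasFDerivWithinAt
    · by_contra hdet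
      apply hx.2
      exact (LinearMap.equivOfDetNeZero
        (((fderiv ℂ g x).restrictScalars ℝ : Cn 2 →L[ℝ] Cn 2) : Cn 2 →ₗ[ℝ] Cn 2) hdet).bijective
  have hpos : 0 < MeasureTheory.volume (ball (0 : Cn 2) ε) := measure_ball_pos _ _ hε
  obtain ⟨q, hq, hq'⟩ : ∃ q ∈ ball (0 : Cn 2) ε, q ∉ g '' K := by
    by_contra hcon
    push Not at hcon
    have := MeasureTheory.measure_mono (μ := MeasureTheory.volume) hcon
    rw [hz] at this
    exact absurd hpos (not_lt.2 this)
  refine ⟨q, by simpa using hq, fun x hx hxq => ?_⟩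
  by_contra hb
  exact hq' ⟨x, ⟨hx, hb⟩, hxq⟩

lemma near_zero {g : Cn 2 → Cn 2} {r : ℝ} (hg : ContinuousOn g (closedBall 0 r))
    (hz : ∀ x ∈ closedBall (0 : Cn 2) r, g x = 0 → x = 0) {ε : ℝ} (hε : 0 < ε) :
    ∃ δ > 0, ∀ q : Cn 2, ‖q‖ < δ → ∀ x ∈ closedBall (0 : Cn 2) r, g x = q → ‖x‖ < ε := by
  have hK : IsCompact (closedBall (0 : Cn 2) r \ ball 0 ε) :=
    (isCompact_closedBall 0 r).diff isOpen_ball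
  have hcl := (hK.image_of_continuousOn (hg.mono diff_subset)).isClosed
  have h0 : (0 : Cn 2) ∈ (g '' (closedBall (0 : Cn 2) r \ ball 0 ε))ᶜ := by
    rintro ⟨x, hx, hx0⟩
    have := hz x hx.1 hx0
    subst this
    exact hx.2 (mem_ball_self hε)
  obtain ⟨δ, hδ, hsub⟩ := Metric.isOpen_iff.1 hcl.isOpen_compl 0 h0
  refine ⟨δ, hδ, fun q hq x hx hxq => ?_⟩
  by_contra hlt
  exact hsub (mem_ball_zero_iff.2 hq) ⟨x, ⟨hx, by simpa using hlt⟩, hxq⟩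

/-- The identification of `ℂ × ℂ` with `Cn 2`. -/
def phi : (ℂ × ℂ) ≃L[ℂ] Cn 2 := (ContinuousLinearEquiv.finTwoArrow ℂ ℂ).symm

lemma phi_zero (p : ℂ × ℂ) : phi p 0 = p.1 := rfl
lemma phi_one (p : ℂ × ℂ) : phi p 1 = p.2 := rfl

lemma norm_phi (p : ℂ × ℂ) : ‖phi p‖ = ‖p‖ := by
  rw [Prod.norm_def]
  apply le_antisymm
  · refine (pi_norm_le_iff_of_nonneg (by positivity)).2 fun i => ?_
    fin_cases i
    · exact le_max_left _ _
    · exact le_max_right _ _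
  · exact max_le (norm_le_pi_norm (phi p) 0) (norm_le_pi_norm (phi p) 1)

/-- The model map. -/
def model (d m : ℕ) (A B C D : Cn 2 → ℂ) (x : Cn 2) : Cn 2 :=
  ![x 0 ^ (m + 1) * A x + x 1 ^ d * B x, x 0 ^ m * x 1 * C x + x 1 ^ (d + 1) * D x]

lemma model_an {d m : ℕ} {A B C D : Cn 2 → ℂ} {x : Cn 2} (hA : AnalyticAt ℂ A x)
    (hB : AnalyticAt ℂ B x) (hC : AnalyticAt ℂ C x) (hD : AnalyticAt ℂ D x) :
    AnalyticAt ℂ (model d m A B C D) x := by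
  have h0 : AnalyticAt ℂ (fun x : Cn 2 => x 0) x :=
    (ContinuousLinearMap.proj (R := ℂ) (φ := fun _ : Fin 2 => ℂ) 0).analyticAt x
  have h1 : AnalyticAt ℂ (fun x : Cn 2 => x 1) x :=
    (ContinuousLinearMap.proj (R := ℂ) (φ := fun _ : Fin 2 => ℂ) 1).analyticAt x
  rw [analyticAt_pi_iff]
  intro i
  fin_cases i
  · exact ((h0.pow (m + 1)).mul hA).add ((h1.pow d).mul hB)
  · exact (((h0.pow m).mul h1).mul hC).add ((h1.pow (d + 1)).mul hD)

lemma zeroOrder_of_isolated {d m : ℕ} (hd : 0 < d) {A B C D : Cn 2 → ℂ} {g : Cn 2 → Cn 2}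
    (hA : AnalyticAt ℂ A 0) (hB : AnalyticAt ℂ B 0) (hC : AnalyticAt ℂ C 0)
    (hD : AnalyticAt ℂ D 0) (hform : ∀ᶠ x in 𝓝 (0 : Cn 2), g x = model d m A B C D x)
    (hiso : IsolatedZeroAt0 g) :
    d * m + m + 1 ≤ zeroOrder g 0 ∧
      (A 0 ≠ 0 → B 0 ≠ 0 → C 0 ≠ 0 → zeroOrder g 0 = d * m + m + 1) := by
  obtain ⟨hg0, hne⟩ := hiso
  rw [eventually_nhdsWithin_iff] at hne
  obtain ⟨a, ha, hball⟩ := Metric.nhds_basis_closedBall.eventually_iff.1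
    (hform.eventually_nhds.and (hne.and (hA.eventually_analyticAt.and
      (hB.eventually_analyticAt.and (hC.eventually_analyticAt.and hD.eventually_analyticAt)))))
  have hphi : ∀ p ∈ closedBall (0 : ℂ × ℂ) a, phi p ∈ closedBall (0 : Cn 2) a := by
    intro p hp
    rw [mem_closedBall_zero_iff] at hp ⊢
    rwa [norm_phi]
  have hcomp : ∀ {G : Cn 2 → ℂ}, (∀ x ∈ closedBall (0 : Cn 2) a, AnalyticAt ℂ G x) →
      AnalyticOnNhd ℂ (fun p => G (phi p)) (closedBall 0 a) := by
    intro G hG p hp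
    exact AnalyticAt.fun_comp (g := G) (f := fun p => phi p) (hG _ (hphi p hp))
      ((phi : (ℂ × ℂ) →L[ℂ] Cn 2).analyticAt p)
  have hzero : ∀ x ∈ closedBall (0 : Cn 2) a, g x = 0 → x = 0 := by
    intro x hx h0
    by_contra hx0
    exact (hball hx).2.1 hx0 h0
  have hgm : ∀ p ∈ closedBall (0 : ℂ × ℂ) a, g (phi p) = model d m A B C D (phi p) :=
    fun p hp => (hball (hphi p hp)).1.self_of_nhds
  have hgan : AnalyticOnNhd ℂ g (closedBall 0 a) := by
    intro x hx
    obtain ⟨h1, -, h2, h3, h4, h5⟩ := hball hx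
    exact (model_an h2 h3 h4 h5).congr (h1.mono fun _ h => h.symm)
  obtain ⟨μ, hN, hN', b, hb, hba, δ₀, hδ₀, hcore⟩ := core (m := m) ha hd
    (hcomp fun x hx => (hball hx).2.2.1) (hcomp fun x hx => (hball hx).2.2.2.1)
    (hcomp fun x hx => (hball hx).2.2.2.2.1) (hcomp fun x hx => (hball hx).2.2.2.2.2)
    (by
      intro p hp h1 h2
      have : g (phi p) = 0 := by
        rw [hgm p hp]
        ext i
        fin_cases i
        · exact h1
        · exact h2
      have h3 := hzero _ (hphi p hp) this
      exact (map_eq_zero_iff phi phi.injective).1 h3)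
  have key : ∀ r > 0, AnalyticOnNhd ℂ g (closedBall 0 r) →
      (∀ x ∈ closedBall (0 : Cn 2) r, g x = 0 → x = 0) →
      ∃ δ > 0, ∀ q : Cn 2, ‖q‖ < δ → IsRegularValueOn g (ball 0 r) q →
        {x ∈ ball (0 : Cn 2) r | g x = q}.ncard = μ := by
    intro r hr hgr hzr
    have hε : 0 < min r b := lt_min hr hb
    obtain ⟨δ₁, hδ₁, h1⟩ := near_zero hgr.continuousOn hzr hε
    obtain ⟨δ₂, hδ₂, h2⟩ := near_zero hgan.continuousOn hzero hε
    refine ⟨min δ₀ (min δ₁ δ₂), lt_min hδ₀ (lt_min hδ₁ hδ₂), fun q hq hreg => ?_⟩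
    rw [lt_min_iff, lt_min_iff] at hq
    obtain ⟨hq0, hq1, hq2⟩ := hq
    have hpoly : ∀ p : ℂ × ℂ, p.1 ∈ ball (0 : ℂ) a → p.2 ∈ ball (0 : ℂ) b →
        p ∈ closedBall (0 : ℂ × ℂ) a := by
      intro p hp1 hp2
      rw [mem_ball_zero_iff] at hp1 hp2
      rw [mem_closedBall_zero_iff, Prod.norm_def]
      exact max_le hp1.le (hp2.le.trans hba.le)
    have hsol : ∀ p ∈ closedBall (0 : ℂ × ℂ) a, g (phi p) = q ↔
        p.1 ^ (m + 1) * A (phi p) + p.2 ^ d * B (phi p) = q 0 ∧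
        p.1 ^ m * p.2 * C (phi p) + p.2 ^ (d + 1) * D (phi p) = q 1 := by
      intro p hp
      rw [hgm p hp]
      constructor
      · rintro rfl
        exact ⟨rfl, rfl⟩
      · rintro ⟨h3, h4⟩
        ext i
        fin_cases i
        · exact h3
        · exact h4
    have hc := hcore (q 0) (q 1) ((norm_le_pi_norm q 0).trans_lt hq0)
      ((norm_le_pi_norm q 1).trans_lt hq0) (by
        intro p hp1 hp2 h3 h4 v hv1 hv2
        have hp := hpoly p hp1 hp2
        have hgq := (hsol p hp).2 ⟨h3, h4⟩
        have hn := h2 q hq2 _ (hphi p hp) hgq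
        have hbij := hreg (phi p) (mem_ball_zero_iff.2 (hn.trans_le (min_le_left _ _))) hgq
        have hgd := (hgan _ (hphi p hp)).differentiableAt.hasFDerivAt
        have hcd : HasFDerivAt (fun p => g (phi p))
            ((fderiv ℂ g (phi p)).comp (phi : (ℂ × ℂ) →L[ℂ] Cn 2)) p :=
          HasFDerivAt.comp p hgd (phi : (ℂ × ℂ) →L[ℂ] Cn 2).hasFDerivAt
        have hci := hasFDerivAt_pi'.1 hcd
        have hev : ∀ᶠ p' in 𝓝 p, g (phi p') = model d m A B C D (phi p') :=
          phi.continuous.continuousAt.eventually (hball (hphi p hp)).1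
        have e0 := (hci 0).congr_of_eventuallyEq (f₁ := fun p : ℂ × ℂ =>
          p.1 ^ (m + 1) * A (phi p) + p.2 ^ d * B (phi p)) (hev.mono fun p' h => by
            show _ = g (phi p') 0
            rw [h]; rfl)
        have e1 := (hci 1).congr_of_eventuallyEq (f₁ := fun p : ℂ × ℂ =>
          p.1 ^ m * p.2 * C (phi p) + p.2 ^ (d + 1) * D (phi p)) (hev.mono fun p' h => by
            show _ = g (phi p') 1
            rw [h]; rfl)
        rw [e0.fderiv] at hv1
        rw [e1.fderiv] at hv2
        have h5 : fderiv ℂ g (phi p) (phi v) = 0 := by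
          ext i
          fin_cases i
          · exact hv1
          · exact hv2
        have h6 : phi v = 0 := hbij.1 (by rw [h5, map_zero])
        exact (map_eq_zero_iff phi phi.injective).1 h6)
    rw [← hc, ← Set.ncard_image_of_injective _ phi.injective]
    congr 1
    ext x
    obtain ⟨p, rfl⟩ := phi.surjective x
    rw [phi.injective.mem_set_image]
    constructor
    · rintro ⟨hx, hxq⟩
      have hn := h1 q hq1 _ (ball_subset_closedBall hx) hxq
      have hnb := hn.trans_le (min_le_right _ _)
      rw [norm_phi] at hnb
      have hp : p ∈ closedBall (0 : ℂ × ℂ) a :=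
        mem_closedBall_zero_iff.2 (hnb.le.trans hba.le)
      obtain ⟨h3, h4⟩ := (hsol p hp).1 hxq
      exact ⟨mem_ball_zero_iff.2 ((norm_fst_le p).trans_lt (hnb.trans hba)),
        mem_ball_zero_iff.2 ((norm_snd_le p).trans_lt hnb), h3, h4⟩
    · rintro ⟨hp1, hp2, h3, h4⟩
      have hp := hpoly p hp1 hp2
      have hgq := (hsol p hp).2 ⟨h3, h4⟩
      have hn := h2 q hq2 _ (hphi p hp) hgq
      exact ⟨mem_ball_zero_iff.2 (hn.trans_le (min_le_left _ _)), hgq⟩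
  have hexr : ∀ r : ℝ, AnalyticOnNhd ℂ g (closedBall 0 r) → ∀ ε > 0,
      ∃ q : Cn 2, ‖q‖ < ε ∧ IsRegularValueOn g (ball 0 r) q := fun r hr ε hε =>
    exists_regular (fun x hx => (hr x (ball_subset_closedBall hx)).differentiableAt) hε
  have hset : {k | HasZeroOrder g 0 k} = {μ} := by
    ext k
    rw [Set.mem_singleton_iff]
    constructor
    · rintro ⟨r, hr, h1, -, h3, h4, δ, hδ, h5⟩
      obtain ⟨δ', hδ', h6⟩ := key r hr h1 h3
      obtain ⟨q, hq, hreg⟩ := h4 _ (lt_min hδ hδ')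
      rw [lt_min_iff] at hq
      exact (h5 q hq.1 hreg).symm.trans (h6 q hq.2 hreg)
    · rintro rfl
      exact ⟨a, ha, hgan, hg0, hzero, hexr a hgan, key a ha hgan hzero⟩
  have hzo : zeroOrder g 0 = μ := by
    rw [zeroOrder, hset, csInf_singleton]
  rw [hzo]
  refine ⟨hN, fun h1 h2 h3 => hN' ?_ ?_ ?_⟩ <;> simpa using by assumption

lemma isolated_of_ne {d m : ℕ} (hd : 0 < d) {A B C D : Cn 2 → ℂ} {g : Cn 2 → Cn 2}
    (hA : AnalyticAt ℂ A 0) (hB : AnalyticAt ℂ B 0) (hC : AnalyticAt ℂ C 0)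
    (hD : AnalyticAt ℂ D 0) (hform : ∀ᶠ x in 𝓝 (0 : Cn 2), g x = model d m A B C D x)
    (hA0 : A 0 ≠ 0) (hB0 : B 0 ≠ 0) (hC0 : C 0 ≠ 0) : IsolatedZeroAt0 g := by
  refine ⟨?_, ?_⟩
  · rw [hform.self_of_nhds]
    ext i
    fin_cases i <;> simp [model, hd.ne']
  · rw [eventually_nhdsWithin_iff]
    have cA := hA.continuousAt
    have cB := hB.continuousAt
    have cC := hC.continuousAt
    have cD := hD.continuousAt
    have hc : ContinuousAt (fun x : Cn 2 => B x * C x - x 0 * A x * D x) 0 :=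
      (cB.mul cC).sub (((continuous_apply 0).continuousAt.mul cA).mul cD)
    filter_upwards [hform, cA.eventually_ne hA0,
      hc.eventually_ne (y := 0) (by simp [hB0, hC0])] with x h1 h2 h3 hx h0
    rw [h1] at h0
    have e1 : x 0 ^ (m + 1) * A x + x 1 ^ d * B x = 0 := congrFun h0 0
    have e2 : x 0 ^ m * x 1 * C x + x 1 ^ (d + 1) * D x = 0 := congrFun h0 1
    apply hx
    by_cases hy : x 1 = 0
    · have : x 0 ^ (m + 1) * A x = 0 := by simpa [hy, hd.ne'] using e1
      have hx0 : x 0 = 0 := by simpa [h2] using this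
      ext i
      fin_cases i
      · exact hx0
      · exact hy
    · exfalso
      have e3 : x 0 ^ m * C x + x 1 ^ d * D x = 0 := by
        have : x 1 * (x 0 ^ m * C x + x 1 ^ d * D x) = 0 := by linear_combination e2
        exact (mul_eq_zero.1 this).resolve_left hy
      have e4 : x 1 ^ d * (B x * C x - x 0 * A x * D x) = 0 := by
        linear_combination C x * e1 - x 0 * A x * e3
      exact (mul_eq_zero.1 e4).elim (pow_ne_zero d hy) h3

end Transfer



/-- Cronin-type computation: for
`g₁ = x₁^{m₁+1}(a₁ + o(1)) + x₂^d(a₂ + o(1))`,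
`g₂ = x₁^{m₁} x₂ (a₃ + o(1)) + x₂^{d+1} O(1)`:
if `0` is an isolated zero of `g` then `π_g(0) ≥ d m₁ + m₁ + 1`, and if
`a₁, a₂, a₃ ≠ 0` then `0` is an isolated zero of `g` and `π_g(0) = d m₁ + m₁ + 1`. -/
theorem zeroOrder_corollary_one (d m₁ : ℕ) (hd : 0 < d) (hm : 0 < m₁)
    (a₁ a₂ a₃ : ℂ) (g : Cn 2 → Cn 2)
    (u₁ u₂ u₃ v : Cn 2 → ℂ)
    (hu₁ : AnalyticAt ℂ u₁ 0) (hu₁0 : u₁ 0 = 0)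
    (hu₂ : AnalyticAt ℂ u₂ 0) (hu₂0 : u₂ 0 = 0)
    (hu₃ : AnalyticAt ℂ u₃ 0) (hu₃0 : u₃ 0 = 0)
    (hv : AnalyticAt ℂ v 0)
    (hform : ∀ᶠ x in 𝓝 (0 : Cn 2),
      g x = ![x 0 ^ (m₁ + 1) * (a₁ + u₁ x) + x 1 ^ d * (a₂ + u₂ x),
              x 0 ^ m₁ * x 1 * (a₃ + u₃ x) + x 1 ^ (d + 1) * v x]) :
    (IsolatedZeroAt0 g → d * m₁ + m₁ + 1 ≤ zeroOrder g 0) ∧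
    (a₁ ≠ 0 → a₂ ≠ 0 → a₃ ≠ 0 →
      IsolatedZeroAt0 g ∧ zeroOrder g 0 = d * m₁ + m₁ + 1) := by
  have hA : AnalyticAt ℂ (fun x => a₁ + u₁ x) 0 := analyticAt_const.add hu₁
  have hB : AnalyticAt ℂ (fun x => a₂ + u₂ x) 0 := analyticAt_const.add hu₂
  have hC : AnalyticAt ℂ (fun x => a₃ + u₃ x) 0 := analyticAt_const.add hu₃
  refine ⟨fun hiso => (zeroOrder_of_isolated hd hA hB hC hv hform hiso).1,
    fun h1 h2 h3 => ?_⟩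
  have h1' : a₁ + u₁ 0 ≠ 0 := by simpa [hu₁0] using h1
  have h2' : a₂ + u₂ 0 ≠ 0 := by simpa [hu₂0] using h2
  have h3' : a₃ + u₃ 0 ≠ 0 := by simpa [hu₃0] using h3
  have hiso := isolated_of_ne hd hA hB hC hv hform h1' h2' h3'
  exact ⟨hiso, (zeroOrder_of_isolated hd hA hB hC hv hform hiso).2 h1' h2' h3'⟩

end ZhangPaper
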